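/- arXiv:1608.01463 — 4 statements merged into one kernel-verified Lean document; each statement's English description precedes it below -/
import Mathlib

section
/- Let G be a multigraph without self-loops, with n vertices and m edges, and let k ≥ 0 and d be integers. Suppose that every vertex v of G satisfies 3 ≤ d(v) ≤ d. If n > dk + k or m > 2dk, then every feedback vertex set of G has size greater than k, i.e., fvs(G) > k. -/
/-- A multigraph on vertex type `V` with edge type `E`: each edge has an
unordered pair of endpoints.  Parallel edges are distinguished (they are
different elements of `E`), and self-loops are edges whose endpoint pair is
diagonal. -/
structure Multigraph (V : Type) (E : Type) where
  ends : E → Sym2 V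

namespace Multigraph

variable {V E : Type}

/-- A multigraph has no self-loops. -/
def LoopFree (G : Multigraph V E) : Prop := ∀ e : E, ¬ (G.ends e).IsDiag

/-- The degree of a vertex: the number of incident edges (parallel edges
counted with multiplicity). -/
noncomputable def degree (G : Multigraph V E) (v : V) : ℕ :=
  Nat.card {e : E // v ∈ G.ends e}

/-- A walk `(v₀, e₁, v₁, …, e_l, v_l)` of positive length `l ≥ 1` in which
each edge `eᵢ` joins `v_{i-1}` and `vᵢ`. -/
structure Walk (G : Multigraph V E) where
  len : ℕ
  len_pos : 0 < len
  verts : Fin (len + 1) → V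
  edges : Fin len → E
  valid : ∀ i : Fin len, G.ends (edges i) = s(verts i.castSucc, verts i.succ)

namespace Walk

variable {G : Multigraph V E}

/-- The first vertex of a walk. -/
def start (W : G.Walk) : V := W.verts 0

/-- The last vertex of a walk. -/
def finish (W : G.Walk) : V := W.verts (Fin.last W.len)

/-- A cycle: a closed walk of positive length with pairwise distinct edges and
pairwise distinct vertices (except that the first and last vertex coincide). -/
def IsCycle (W : G.Walk) : Prop :=
  W.start = W.finish ∧ Function.Injective W.edges ∧
    Function.Injective fun i : Fin W.len => W.verts i.castSucc

/-- An `s`-cycle: a walk with `v₀ = v_l = s`, with `vᵢ ≠ s` for `0 < i < l`,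
with no U-turns (`eᵢ ≠ e_{i+1}`), and in which every edge occurs at most
twice. -/
def IsSCycle (W : G.Walk) (s : V) : Prop :=
  W.start = s ∧ W.finish = s ∧
  (∀ i : Fin (W.len + 1), i ≠ 0 → i ≠ Fin.last W.len → W.verts i ≠ s) ∧
  (∀ i j : Fin W.len, (i : ℕ) + 1 = (j : ℕ) → W.edges i ≠ W.edges j) ∧
  (∀ e : E, Nat.card {i : Fin W.len // W.edges i = e} ≤ 2)

/-- The multiplicity of a vertex `v` in the multiset `V(W)` of vertices of a
walk `W`. -/
noncomputable def vertCount (W : G.Walk) (v : V) : ℕ :=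
  Nat.card {i : Fin (W.len + 1) // W.verts i = v}

end Walk

/-- `S` is a feedback vertex set: every cycle of `G` meets `S`
(equivalently, `G − S` contains no cycle). -/
def IsFVS (G : Multigraph V E) (S : Set V) : Prop :=
  ∀ W : G.Walk, W.IsCycle → ∃ i, W.verts i ∈ S

/-- The minimum size of a feedback vertex set. -/
noncomputable def fvs [Fintype V] (G : Multigraph V E) : ℕ :=
  sInf {n : ℕ | ∃ S : Set V, G.IsFVS S ∧ S.ncard = n}

/-- `x : V → ℝ≥0` is an `s`-cycle cover: `x s = 0` and every `s`-cycle `C`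
satisfies `x(V(C)) ≥ 1` (vertices counted with multiplicity). -/
def IsSCycleCover (G : Multigraph V E) (s : V) (x : V → ℝ) : Prop :=
  (∀ v, 0 ≤ x v) ∧ x s = 0 ∧
    ∀ W : G.Walk, W.IsSCycle s → 1 ≤ ∑ i, x (W.verts i)

/-- A function is half-integral if it takes values in `{0, 1/2, 1}`. -/
def HalfIntegral (x : V → ℝ) : Prop := ∀ v, x v = 0 ∨ x v = 1/2 ∨ x v = 1

/-- A minimum `s`-cycle cover. -/
def IsMinSCycleCover [Fintype V] (G : Multigraph V E) (s : V) (x : V → ℝ) : Prop :=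
  G.IsSCycleCover s x ∧ ∀ x' : V → ℝ, G.IsSCycleCover s x' → ∑ v, x v ≤ ∑ v, x' v

/-- An `s`-cycle packing: a nonnegative, finitely supported weighting of the
`s`-cycles such that every vertex `v ≠ s` is used (with multiplicity) with
total weight at most `1`. -/
def IsSCyclePacking (G : Multigraph V E) (s : V) (y : G.Walk →₀ ℝ) : Prop :=
  (∀ W, 0 ≤ y W) ∧ (∀ W, y W ≠ 0 → W.IsSCycle s) ∧
    ∀ v : V, v ≠ s → ∑ W ∈ y.support, (W.vertCount v : ℝ) * y W ≤ 1

/-- The size of an `s`-cycle packing. -/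
noncomputable def packingSize {G : Multigraph V E} (y : G.Walk →₀ ℝ) : ℝ :=
  ∑ W ∈ y.support, y W

/-- Number of edges incident to `v` with `f`-value 1. -/
noncomputable def cnt1 (G : Multigraph V E) (f : E → ℝ) (v : V) : ℕ :=
  Nat.card {e : E // v ∈ G.ends e ∧ f e = 1}

/-- Number of edges incident to `v` with `f`-value 1/2. -/
noncomputable def cntH (G : Multigraph V E) (f : E → ℝ) (v : V) : ℕ :=
  Nat.card {e : E // v ∈ G.ends e ∧ f e = 1/2}

/-- type-O: all incident edges have `f`-value 0. -/
def IsTypeO (G : Multigraph V E) (f : E → ℝ) (v : V) : Prop :=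
  ∀ e : E, v ∈ G.ends e → f e = 0

/-- type-I: exactly two incident edges have value 1 and none has value 1/2. -/
def IsTypeI (G : Multigraph V E) (f : E → ℝ) (v : V) : Prop :=
  G.cnt1 f v = 2 ∧ G.cntH f v = 0

/-- type-H: no incident edge has value 1 and exactly two have value 1/2. -/
def IsTypeH (G : Multigraph V E) (f : E → ℝ) (v : V) : Prop :=
  G.cnt1 f v = 0 ∧ G.cntH f v = 2

/-- type-T: exactly one incident edge has value 1 and exactly two have value 1/2. -/
def IsTypeT (G : Multigraph V E) (f : E → ℝ) (v : V) : Prop :=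
  G.cnt1 f v = 1 ∧ G.cntH f v = 2

/-- A basic `s`-cycle packing: `f : E → {0,1/2,1}` with `f(e) ∈ {0,1}` on edges
incident to `s`, every vertex `v ≠ s` of one of the four types O, I, H, T, and
every cycle consisting of edges of value 1/2 (i.e. every half-integral cycle)
containing an odd number of type-T vertices. -/
def IsBasicSCyclePacking (G : Multigraph V E) (s : V) (f : E → ℝ) : Prop :=
  (∀ e : E, f e = 0 ∨ f e = 1/2 ∨ f e = 1) ∧
  (∀ e : E, s ∈ G.ends e → f e = 0 ∨ f e = 1) ∧
  (∀ v : V, v ≠ s →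
    G.IsTypeO f v ∨ G.IsTypeI f v ∨ G.IsTypeH f v ∨ G.IsTypeT f v) ∧
  (∀ W : G.Walk, W.IsCycle → (∀ j, f (W.edges j) = 1/2) →
    Odd (Nat.card {i : Fin W.len // G.IsTypeT f (W.verts i.castSucc)}))

/-- The size of a basic `s`-cycle packing: `(1/2) · Σ_{e ∈ δ(s)} f(e)`. -/
noncomputable def basicSize [Fintype E] (G : Multigraph V E) (s : V) (f : E → ℝ) : ℝ :=
  (1/2) * ∑ e : E, Set.indicator {e' : E | s ∈ G.ends e'} f e

/-- `u` and `v` are connected by a walk avoiding the vertex set `S` and the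
edge set `F` (or `u = v`). -/
def Reach (G : Multigraph V E) (S : Set V) (F : Set E) (u v : V) : Prop :=
  u = v ∨ ∃ W : G.Walk, (∀ i, W.verts i ∉ S) ∧ (∀ j, W.edges j ∉ F) ∧
    W.start = u ∧ W.finish = v

/-- The edge `e` belongs to the set `B` of the `s`-cycle cover reduction with
respect to the set `X`: `e` joins `s` to some `u ∉ X`, `e` is a bridge of
`G − X` (its endpoints are disconnected in `G − X − e`), and the connected
component of `u` in `G − X − s` is a tree (no cycle of `G − X − s` passes
through a vertex reachable from `u` in `G − X − s`). -/
def InB (G : Multigraph V E) (s : V) (X : Set V) (e : E) : Prop :=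
  ∃ u : V, G.ends e = s(s, u) ∧ u ≠ s ∧ u ∉ X ∧ s ∉ X ∧
    ¬ G.Reach X {e} s u ∧
    ¬ ∃ W : G.Walk, W.IsCycle ∧ (∀ i, W.verts i ∉ X ∪ {s}) ∧
        G.Reach (X ∪ {s}) ∅ u W.start

/-- The graph `G' = (V, E')` obtained from `G` by the `s`-cycle cover
reduction with respect to a half-integral `s`-cycle cover `x`: with
`X = x⁻¹(1)`, insert a double edge (two new parallel edges) between `s` and
each `v ∈ X`, and delete the edges of `B`. -/
def reduced (G : Multigraph V E) (s : V) (x : V → ℝ) :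
    Multigraph V ({e : E // ¬ G.InB s {v : V | x v = 1} e} ⊕ ({v : V // x v = 1} × Bool)) where
  ends := fun e =>
    match e with
    | .inl e' => G.ends e'.val
    | .inr p => s(s, p.1.val)

/-- The graph `G − s` obtained by deleting the vertex `s` and all incident
edges (the vertex `s` is kept as an isolated vertex). -/
def deleteVertex (G : Multigraph V E) (s : V) :
    Multigraph V {e : E // s ∉ G.ends e} where
  ends := fun e => G.ends e.val

/-- An `f`-augmenting walk for a basic `s`-cycle packing `f`:
(1) it starts at `s`; (2) its first edge has value 0; (3) its edges are
pairwise distinct; (4) its vertices `v₀,…,v_{l-1}` are pairwise distinct;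
(5) each interior vertex `vᵢ` (`1 ≤ i ≤ l-1`) is type-O, or type-I with
`f(e) = 1` for at least one of `e ∈ {eᵢ, e_{i+1}}`; (6) if the last vertex
`v_l` equals `vᵢ` for some `i < l` then: `v_l = s` and `f(e_l) = 0`, or `v_l`
is type-O, or `v_l` is type-I and `f(e) = 1` for at least one of
`e ∈ {eᵢ, e_l}`; (7) if `v_l` is a new vertex then it is type-H or type-T. -/
def IsAugmentingWalk (G : Multigraph V E) (s : V) (f : E → ℝ) (W : G.Walk) : Prop :=
  W.start = s ∧
  f (W.edges ⟨0, W.len_pos⟩) = 0 ∧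
  Function.Injective W.edges ∧
  Function.Injective (fun i : Fin W.len => W.verts i.castSucc) ∧
  (∀ i : Fin W.len, 0 < i.val →
    (G.IsTypeO f (W.verts i.castSucc) ∨
      (G.IsTypeI f (W.verts i.castSucc) ∧
        (f (W.edges ⟨i.val - 1, Nat.lt_of_le_of_lt (Nat.sub_le _ _) i.isLt⟩) = 1 ∨
          f (W.edges i) = 1)))) ∧
  (∀ i : Fin W.len, W.finish = W.verts i.castSucc →
    ((W.finish = s ∧ f (W.edges ⟨W.len - 1, Nat.sub_lt W.len_pos Nat.one_pos⟩) = 0) ∨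
     (W.finish ≠ s ∧ G.IsTypeO f W.finish) ∨
     (W.finish ≠ s ∧ G.IsTypeI f W.finish ∧
       (f (W.edges ⟨i.val - 1, Nat.lt_of_le_of_lt (Nat.sub_le _ _) i.isLt⟩) = 1 ∨
         f (W.edges ⟨W.len - 1, Nat.sub_lt W.len_pos Nat.one_pos⟩) = 1)))) ∧
  ((∀ i : Fin W.len, W.finish ≠ W.verts i.castSucc) →
    (G.IsTypeH f W.finish ∨ G.IsTypeT f W.finish))

/-- `g = f_W` is obtained from `f` by augmenting along the walk `W`.
If `v_l = s` (so `h = l`), the values of `f` on `e₁,…,e_l` are flipped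
(`f ↦ 1 − f`).  If `v_l ≠ s` equals an earlier vertex `vᵢ` (so `h = i`), the
values on `e₁,…,e_h` are flipped and the values on `e_{h+1},…,e_l` are set to
`1/2`.  If `v_l ≠ s` is a new vertex (type-H or type-T, with `h = l`), the
values on `e₁,…,e_l` are flipped and, on the half-integral cycle `C` of `v_l`
(traversed from `t₀ = v_l` in either direction), the edges of the segment
`Pᵢ` between consecutive markers `tᵢ, t_{i+1}` (the markers being `v_l`
together with the type-T vertices of `C`) receive value `0` for even `i` and
`1` for odd `i`; the segment index of an edge is the number of type-T
vertices strictly preceding it along the traversal.  All other edges keep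
their `f`-value. -/
def AugmentedAlong (G : Multigraph V E) (s : V) (f : E → ℝ) (W : G.Walk) (g : E → ℝ) : Prop :=
  -- Case A : the walk returns to `s`.
  (W.finish = s ∧
    (∀ j : Fin W.len, g (W.edges j) = 1 - f (W.edges j)) ∧
    (∀ e : E, (∀ j, e ≠ W.edges j) → g e = f e)) ∨
  -- Case B : the last vertex is a repeated vertex `vᵢ ≠ s` (type-O or type-I).
  (W.finish ≠ s ∧
    (∃ i : Fin W.len, W.finish = W.verts i.castSucc ∧
      (∀ j : Fin W.len, j.val < i.val → g (W.edges j) = 1 - f (W.edges j)) ∧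
      (∀ j : Fin W.len, i.val ≤ j.val → g (W.edges j) = 1/2) ∧
      (∀ e : E, (∀ j, e ≠ W.edges j) → g e = f e))) ∨
  -- Case C : the last vertex is a new vertex of type-H or type-T.
  (W.finish ≠ s ∧ (∀ i : Fin W.len, W.finish ≠ W.verts i.castSucc) ∧
    (∃ C : G.Walk, C.IsCycle ∧ C.verts 0 = W.finish ∧
      (∀ j, f (C.edges j) = 1/2) ∧
      (∀ j : Fin W.len, g (W.edges j) = 1 - f (W.edges j)) ∧
      (∀ j : Fin C.len,
        g (C.edges j) =
          if Even (Nat.card {m : Fin C.len //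
              1 ≤ m.val ∧ m.val ≤ j.val ∧ G.IsTypeT f (C.verts m.castSucc)})
          then 0 else 1) ∧
      (∀ e : E, (∀ j, e ≠ W.edges j) → (∀ j, e ≠ C.edges j) → g e = f e)))


end Multigraph

namespace Multigraph

/-- Two distinct parallel edges form a cycle. -/
lemma aux_parallel {V E : Type} (G : Multigraph V E) (hloop : G.LoopFree) (S : Set V)
    (hS : G.IsFVS S) (e f : E) (hef : G.ends e = G.ends f) (he : ∀ v ∈ G.ends e, v ∉ S) :
    e = f := by
  by_contra hne
  obtain ⟨⟨u, v⟩, huv⟩ := Quot.exists_rep (G.ends e)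
  replace huv : G.ends e = s(u, v) := huv.symm
  have hl := hloop e
  rw [huv] at hl he
  have huv' : u ≠ v := by simpa using hl
  let W : G.Walk :=
    { len := 2
      len_pos := by norm_num
      verts := ![u, v, u]
      edges := ![e, f]
      valid := by
        intro i
        fin_cases i
        · simpa using huv
        · rw [huv] at hef
          simpa [Sym2.eq_swap] using hef.symm }
  obtain ⟨i, hi⟩ := hS W (by
    refine ⟨rfl, ?_, ?_⟩
    · intro i j h
      change Fin 2 at i j
      fin_cases i <;> fin_cases j <;> simp [W] at h ⊢
      · exact hne h
      · exact hne h.symm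
    · intro i j h
      change Fin 2 at i j
      fin_cases i <;> fin_cases j <;> simp [W] at h ⊢
      · exact huv' h
      · exact huv' h.symm)
  change Fin 3 at i
  fin_cases i
  · exact he u (by simp) hi
  · exact he v (by simp) hi
  · exact he u (by simp) hi

/-- The simple graph underlying `G − S`. -/
def auxGraph {V E : Type} (G : Multigraph V E) (S : Set V) : SimpleGraph {v : V // v ∉ S} where
  Adj u v := u ≠ v ∧ ∃ e, G.ends e = s(u.1, v.1)
  symm := ⟨fun u v h => ⟨h.1.symm, by
    obtain ⟨e, he⟩ := h.2
    exact ⟨e, by rw [he, Sym2.eq_swap]⟩⟩⟩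
  loopless := ⟨fun u h => h.1 rfl⟩

lemma aux_acyclic {V E : Type} (G : Multigraph V E) (S : Set V)
    (hS : G.IsFVS S) : (G.auxGraph S).IsAcyclic := by
  intro v c hc
  have hadj : ∀ i : Fin c.length, ∃ e, G.ends e =
      s((c.getVert i.1).1, (c.getVert (i.1 + 1)).1) := fun i =>
    (c.adj_getVert_succ i.2).2
  choose g hg using hadj
  have h3 := hc.three_le_length
  let W : G.Walk :=
    { len := c.length
      len_pos := by omega
      verts := fun i => (c.getVert i.1).1
      edges := g
      valid := fun i => by simpa using hg i }
  obtain ⟨i, hi⟩ := hS W (by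
    refine ⟨?_, ?_, ?_⟩
    · simp [W, Walk.start, Walk.finish]
    · intro i j h
      change Fin c.length at i j
      change g i = g j at h
      have h1 := hg i
      rw [h, hg j] at h1
      have h2 : s(c.getVert j.1, c.getVert (j.1 + 1)) = s(c.getVert i.1, c.getVert (i.1 + 1)) := by
        apply Sym2.map.injective Subtype.val_injective
        simpa using h1
      have hi : i.1 < c.edges.length := by simp
      have hj : j.1 < c.edges.length := by simp
      rw [← SimpleGraph.Walk.getElem_edges hi, ← SimpleGraph.Walk.getElem_edges hj] at h2
      have := (hc.edges_nodup.getElem_inj_iff).1 h2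
      exact Fin.ext this.symm
    · intro i j h
      change Fin c.length at i j
      have h' : c.getVert i.1 = c.getVert j.1 := Subtype.ext h
      exact Fin.ext (hc.getVert_injOn' (by have := i.2; simp; omega)
        (by have := j.2; simp; omega) h'))
  exact (c.getVert i.1).2 hi

open Classical in
lemma aux_forest {V E : Type} [Fintype V] [Fintype E] (G : Multigraph V E)
    (hloop : G.LoopFree) (S : Set V) (hS : G.IsFVS S) :
    (Finset.univ.filter fun e : E => ∀ v ∈ G.ends e, v ∉ S).card ≤
      Fintype.card {v : V // v ∉ S} := by
  have h1 : (Finset.univ.filter fun e : E => ∀ v ∈ G.ends e, v ∉ S).card ≤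
      (G.auxGraph S).edgeFinset.card := by
    rw [← Finset.card_image_of_injOn (f := G.ends)]
    · refine le_trans (Finset.card_le_card ?_)
        (Finset.card_image_le (f := Sym2.map Subtype.val) (s := (G.auxGraph S).edgeFinset))
      intro x hx
      obtain ⟨e, he, rfl⟩ := Finset.mem_image.1 hx
      replace he := (Finset.mem_filter.1 he).2
      obtain ⟨⟨u, v⟩, huv⟩ := Quot.exists_rep (G.ends e)
      replace huv : G.ends e = s(u, v) := huv.symm
      have hl := hloop e
      rw [huv] at hl he
      have huv' : u ≠ v := by simpa using hl
      refine Finset.mem_image.2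
        ⟨s(⟨u, he u (by simp)⟩, ⟨v, he v (by simp)⟩), ?_, by simp [huv]⟩
      rw [SimpleGraph.mem_edgeFinset, SimpleGraph.mem_edgeSet]
      exact ⟨by simpa using huv', e, huv⟩
    · intro e he f _ hef
      exact G.aux_parallel hloop S hS e f hef (by simpa using he)
  refine h1.trans ?_
  by_cases hne : Nonempty {v : V // v ∉ S}
  · obtain ⟨T, hHT, -, hT⟩ := SimpleGraph.connected_top.exists_isTree_le_of_le_of_isAcyclic
      (le_top : G.auxGraph S ≤ ⊤) (G.aux_acyclic S hS)
    have h2 := hT.card_edgeFinset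
    have h3 : (G.auxGraph S).edgeFinset.card ≤ T.edgeFinset.card :=
      Finset.card_le_card (by simpa using hHT)
    omega
  · have : IsEmpty {v : V // v ∉ S} := not_nonempty_iff.1 hne
    have h4 : (G.auxGraph S).edgeFinset = ∅ := by
      apply Finset.eq_empty_of_forall_notMem
      intro x
      induction x with
      | _ u v => exact (this.false u).elim
    simp [h4]

open Classical in
lemma aux_count {V E : Type} [Fintype V] [Fintype E] (G : Multigraph V E)
    (hloop : G.LoopFree) (d : ℕ)
    (hdeg : ∀ v : V, 3 ≤ G.degree v ∧ G.degree v ≤ d) (S : Set V) (hS : G.IsFVS S) :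
    Fintype.card V ≤ d * S.ncard + S.ncard ∧ Fintype.card E ≤ 2 * d * S.ncard := by
  set A := Finset.univ.filter fun e : E => ∀ v ∈ G.ends e, v ∉ S with hA
  set B := Finset.univ.filter fun e : E => ¬ ∀ v ∈ G.ends e, v ∉ S with hB
  set F := Finset.univ.filter fun v : V => v ∉ S with hF
  set T := Finset.univ.filter fun v : V => v ∈ S with hT
  have hTc : T.card = S.ncard := by
    rw [Set.ncard_eq_toFinset_card']
    congr 1
    ext; simp [hT]
  have hFA : A.card ≤ F.card := by
    refine (G.aux_forest hloop S hS).trans_eq ?_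
    rw [Fintype.card_subtype]
  have hTF : T.card + F.card = Fintype.card V :=
    Finset.card_filter_add_card_filter_not (s := Finset.univ) _
  have hAB : A.card + B.card = Fintype.card E :=
    Finset.card_filter_add_card_filter_not (s := Finset.univ) _
  have hd : ∀ v, G.degree v = (Finset.univ.filter fun e : E => v ∈ G.ends e).card := by
    intro v
    rw [degree, Nat.card_eq_fintype_card, Fintype.card_subtype]
  have hBT : B.card ≤ d * T.card := by
    calc B.card ≤ (T.biUnion fun v => Finset.univ.filter fun e : E => v ∈ G.ends e).card := by
          apply Finset.card_le_card
          intro e he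
          simp only [hB, Finset.mem_filter, Finset.mem_univ, true_and] at he
          push Not at he
          obtain ⟨v, hv, hvS⟩ := he
          simp only [Finset.mem_biUnion, Finset.mem_filter, Finset.mem_univ, true_and, hT]
          exact ⟨v, hvS, hv⟩
      _ ≤ T.card * d := Finset.card_biUnion_le_card_mul _ _ _ fun v _ => by
          rw [← hd]; exact (hdeg v).2
      _ = d * T.card := mul_comm _ _
  have hsum : 3 * F.card ≤ 2 * A.card + B.card := by
    calc 3 * F.card = ∑ v ∈ F, 3 := by simp [mul_comm]
      _ ≤ ∑ v ∈ F, (Finset.univ.filter fun e : E => v ∈ G.ends e).card :=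
          Finset.sum_le_sum fun v _ => by rw [← hd]; exact (hdeg v).1
      _ = ∑ e : E, (F.filter fun v => v ∈ G.ends e).card :=
          Finset.sum_card_bipartiteAbove_eq_sum_card_bipartiteBelow (fun v e => v ∈ G.ends e)
      _ = ∑ e ∈ A, (F.filter fun v => v ∈ G.ends e).card
            + ∑ e ∈ B, (F.filter fun v => v ∈ G.ends e).card :=
          (Finset.sum_filter_add_sum_filter_not _ _ _).symm
      _ ≤ ∑ e ∈ A, 2 + ∑ e ∈ B, 1 := by
          apply add_le_add <;> apply Finset.sum_le_sum
          · intro e _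
            obtain ⟨⟨u, v⟩, huv⟩ := Quot.exists_rep (G.ends e)
            replace huv : G.ends e = s(u, v) := huv.symm
            refine le_trans (Finset.card_le_card (t := {u, v}) ?_) Finset.card_le_two
            intro w hw
            simpa [huv] using (Finset.mem_filter.1 hw).2
          · intro e he
            simp only [hB, Finset.mem_filter, Finset.mem_univ, true_and] at he
            push Not at he
            obtain ⟨x, hx, hxS⟩ := he
            obtain ⟨y, hy⟩ := Sym2.mem_iff_exists.1 hx
            refine le_trans (Finset.card_le_card (t := {y}) ?_) (by simp)
            intro w hw
            obtain ⟨hw1, hw2⟩ := Finset.mem_filter.1 hw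
            rw [hy, Sym2.mem_iff] at hw2
            rcases hw2 with rfl | rfl
            · exact absurd hxS (by simpa [hF] using hw1)
            · simp
      _ = 2 * A.card + B.card := by simp [mul_comm]
  rw [← hTc]
  have : 2 * d * T.card = 2 * (d * T.card) := mul_assoc _ _ _
  constructor <;> omega

end Multigraph

/-- if every vertex of a loop-free multigraph has degree between
`3` and `d`, and `n > dk + k` or `m > 2dk`, then every feedback vertex set has
size greater than `k`. -/
theorem stmt0_fvs_gt_of_degree_bounds {V E : Type} [Fintype V] [Fintype E]
    (G : Multigraph V E) (hloop : G.LoopFree) (k d : ℕ)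
    (hdeg : ∀ v : V, 3 ≤ G.degree v ∧ G.degree v ≤ d)
    (hsize : Fintype.card V > d * k + k ∨ Fintype.card E > 2 * d * k) :
    ∀ S : Set V, G.IsFVS S → k < S.ncard := by
  intro S hS
  by_contra hlt
  have hk : S.ncard ≤ k := not_lt.1 hlt
  obtain ⟨h1, h2⟩ := G.aux_count hloop d hdeg S hS
  have h3 : d * S.ncard ≤ d * k := Nat.mul_le_mul_left _ hk
  have h4 : 2 * d * S.ncard ≤ 2 * d * k := Nat.mul_le_mul_left _ hk
  omega
end

section
/- Let G=(V,E) be a multigraph without self-loops and let s ∈ V. Then there exists an s-cycle cover x of G taking values only in {0, 1/2, 1} such that x(V) ≤ x'(V) for every s-cycle cover x' of G; that is, there exists a half-integral minimum s-cycle cover. -/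
namespace Multigraph

section Aux

variable {V E : Type}

/-- Distances from `s` (vertex weights included), capped at `1` before adding the last weight. -/
theorem aux_dist [Fintype V] (G : Multigraph V E) (s : V) (x : V → ℝ) (hx : ∀ v, 0 ≤ x v)
    (hs : x s = 0) :
    ∃ D d : V → ℝ, (∀ v, 0 ≤ D v) ∧ (∀ v, d v = D v + x v) ∧ D s = 0 ∧
      (∀ e u v, G.ends e = s(u, v) → D v ≤ d u) ∧
      (∀ v, v ≠ s → D v < 1 → ∃ e u, G.ends e = s(u, v) ∧ d u = D v) := by
  classical
  let S : (V → ENNReal) → V → Set ENNReal := fun g v =>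
    insert 1 {t | ∃ e u, G.ends e = s(u, v) ∧ g u = t}
  let F : (V → ENNReal) →o (V → ENNReal) :=
    { toFun := fun g v => if v = s then 0 else sInf (S g v) + ENNReal.ofReal (x v)
      monotone' := by
        intro g g' hgg v
        dsimp only
        split_ifs with h
        · exact le_rfl
        · refine add_le_add ?_ le_rfl
          refine le_sInf ?_
          rintro t (rfl | ⟨e, u, he, rfl⟩)
          · exact sInf_le (Set.mem_insert _ _)
          · have hm : g u ∈ S g v := Set.mem_insert_of_mem _ ⟨e, u, he, rfl⟩
            exact (sInf_le hm).trans (hgg u) }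
  let g := OrderHom.lfp F
  have hg : ∀ v, g v = if v = s then 0 else sInf (S g v) + ENNReal.ofReal (x v) := by
    intro v
    exact (congrFun (OrderHom.map_lfp F) v).symm
  let N : V → ENNReal := fun v => if v = s then 0 else sInf (S g v)
  have hN1 : ∀ v, N v ≤ 1 := by
    intro v
    simp only [N]
    split_ifs
    · simp
    · exact sInf_le (Set.mem_insert _ _)
  have hNtop : ∀ v, N v ≠ ⊤ := fun v => ne_top_of_le_ne_top ENNReal.one_ne_top (hN1 v)
  have hgN : ∀ v, g v = N v + ENNReal.ofReal (x v) := by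
    intro v
    rw [hg v]
    simp only [N]
    split_ifs with h
    · subst h; simp [hs]
    · rfl
  have hgtop : ∀ v, g v ≠ ⊤ := by
    intro v
    rw [hgN]
    exact ENNReal.add_ne_top.2 ⟨hNtop v, ENNReal.ofReal_ne_top⟩
  refine ⟨fun v => (N v).toReal, fun v => (g v).toReal, fun v => ENNReal.toReal_nonneg, ?_, ?_, ?_,
    ?_⟩
  · intro v
    dsimp only
    rw [hgN, ENNReal.toReal_add (hNtop v) ENNReal.ofReal_ne_top, ENNReal.toReal_ofReal (hx v)]
  · simp [N]
  · intro e u v he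
    refine ENNReal.toReal_mono (hgtop u) ?_
    simp only [N]
    split_ifs
    · simp
    · exact sInf_le (Set.mem_insert_of_mem _ ⟨e, u, he, rfl⟩)
  · intro v hv h1
    have hfin : (S g v).Finite := by
      refine Set.Finite.insert _ ((Set.finite_range g).subset ?_)
      rintro t ⟨e, u, -, rfl⟩
      exact ⟨u, rfl⟩
    have hmem : sInf (S g v) ∈ S g v :=
      Set.Nonempty.csInf_mem ⟨1, Set.mem_insert _ _⟩ hfin
    have hNv : N v = sInf (S g v) := if_neg hv
    rcases hmem with h | ⟨e, u, he, hu⟩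
    · exfalso
      dsimp only at h1
      rw [hNv, h] at h1
      simp at h1
    · refine ⟨e, u, he, ?_⟩
      dsimp only
      rw [hNv, ← hu]

/-- The chain of parents down to `s`. -/
theorem aux_chain [Fintype V] (s : V) (x d : V → ℝ) (par : V → V) (hds : d s = 0) (hs : x s = 0)
    (hx : ∀ v, v ≠ s → 0 < x v)
    (hpar : ∀ v, v ≠ s → d v < 1 → d v = d (par v) + x v) :
    ∀ v, d v < 1 → ∃ n, par^[n] v = s ∧ (∀ k < n, par^[k] v ≠ s) ∧
      (∀ k ≤ n, d (par^[k] v) < 1) ∧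
      (∀ i j, i < j → j ≤ n → d (par^[j] v) < d (par^[i] v)) ∧
      ∑ k ∈ Finset.range (n + 1), x (par^[k] v) = d v := by
  have wf : WellFounded (fun a b : V => d a < d b) := by
    have : IsTrans V (fun a b : V => d a < d b) := ⟨fun _ _ _ h1 h2 => lt_trans h1 h2⟩
    have : Std.Irrefl (fun a b : V => d a < d b) := ⟨fun _ h => lt_irrefl _ h⟩
    exact Finite.wellFounded_of_trans_of_irrefl _
  intro v
  induction v using wf.induction with
  | _ v ih =>
    intro hv
    by_cases hvs : v = s
    · subst hvs
      refine ⟨0, rfl, by simp, ?_, ?_, ?_⟩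
      · intro k hk
        obtain rfl : k = 0 := by omega
        exact hv
      · intro i j h1 h2; omega
      · simp [hs, hds]
    · have h1 := hpar v hvs hv
      have h2 := hx v hvs
      have hlt : d (par v) < d v := by linarith
      obtain ⟨n, a1, a2, a3, a4, a5⟩ := ih (par v) hlt (hlt.trans hv)
      refine ⟨n + 1, a1, ?_, ?_, ?_, ?_⟩
      · intro k hk
        cases k with
        | zero => exact hvs
        | succ k => exact a2 k (by omega)
      · intro k hk
        cases k with
        | zero => exact hv
        | succ k => exact a3 k (by omega)
      · intro i j hij hj
        cases j with
        | zero => omega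
        | succ j =>
          cases i with
          | succ i => exact a4 i j (by omega) (by omega)
          | zero =>
            rcases Nat.eq_zero_or_pos j with rfl | hj0
            · exact hlt
            · exact (a4 0 j hj0 (by omega)).trans hlt
      · rw [Finset.sum_range_succ']
        simp only [Function.iterate_succ_apply, Function.iterate_zero, id]
        rw [a5, h1]

/-- Every `s`-cycle contains an edge whose endpoints have total distance at least one. -/
theorem aux_edge [Fintype V] (G : Multigraph V E) (hloop : G.LoopFree) (s : V) (x D d : V → ℝ)
    (hx : ∀ v, v ≠ s → 0 < x v) (hc : G.IsSCycleCover s x)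
    (hD0 : ∀ v, 0 ≤ D v) (hd : ∀ v, d v = D v + x v) (hDs : D s = 0)
    (hatt : ∀ v, v ≠ s → D v < 1 → ∃ e u, G.ends e = s(u, v) ∧ d u = D v)
    (W : G.Walk) (hW : W.IsSCycle s) :
    ∃ i : Fin W.len, 1 ≤ d (W.verts i.castSucc) + d (W.verts i.succ) := by
  classical
  by_contra hcon
  push Not at hcon
  obtain ⟨hx0, hxs, hcov⟩ := hc
  have hds : d s = 0 := by rw [hd, hDs, hxs]; simp
  have hd0 : ∀ v, 0 ≤ d v := fun v => by rw [hd]; exact add_nonneg (hD0 v) (hx0 v)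
  have hdpos : ∀ v, v ≠ s → 0 < d v := fun v hv => by
    rw [hd]; exact add_pos_of_nonneg_of_pos (hD0 v) (hx v hv)
  have hatt' : ∀ v, ∃ eu : E × V, v ≠ s → d v < 1 →
      G.ends eu.1 = s(eu.2, v) ∧ d v = d eu.2 + x v := by
    intro v
    by_cases h : v ≠ s ∧ d v < 1
    · obtain ⟨e, u, h1, h2⟩ := hatt v h.1 (by have := hx0 v; have := hd v; linarith [h.2])
      exact ⟨(e, u), fun _ _ => ⟨h1, by rw [h2, hd]⟩⟩
    · exact ⟨(W.edges ⟨0, W.len_pos⟩, v), fun h1 h2 => absurd ⟨h1, h2⟩ h⟩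
  choose eu heu using hatt'
  let pe : V → E := fun v => (eu v).1
  let par : V → V := fun v => (eu v).2
  have hpe : ∀ v, v ≠ s → d v < 1 → G.ends (pe v) = s(par v, v) := fun v h1 h2 => (heu v h1 h2).1
  have hpar : ∀ v, v ≠ s → d v < 1 → d v = d (par v) + x v := fun v h1 h2 => (heu v h1 h2).2
  have hparlt : ∀ v, v ≠ s → d v < 1 → d (par v) < d v := fun v h1 h2 => by
    have := hpar v h1 h2; have := hx v h1; linarith
  have hpeinj : ∀ a b, a ≠ s → b ≠ s → d a < 1 → d b < 1 → pe a = pe b → a = b := by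
    intro a b ha hb ha1 hb1 hab
    have h1 := hpe a ha ha1
    rw [hab, hpe b hb hb1, Sym2.eq_iff] at h1
    rcases h1 with ⟨-, h⟩ | ⟨h1, h2⟩
    · exact h.symm
    · have := hparlt a ha ha1
      have := hparlt b hb hb1
      rw [h1] at this
      rw [h2] at this
      linarith
  obtain ⟨hWs, hWf, hWi, hWu, -⟩ := hW
  -- a non-tree edge
  have hnt : ∃ i : Fin W.len, ∀ w, w ≠ s → d w < 1 → pe w ≠ W.edges i := by
    by_contra hno
    push Not at hno
    obtain ⟨i, -, hi⟩ := Finset.exists_max_image Finset.univ (fun i => d (W.verts i))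
      ⟨0, Finset.mem_univ _⟩
    have hi : ∀ j, d (W.verts j) ≤ d (W.verts i) := fun j => hi j (Finset.mem_univ _)
    have hpos : 0 < d (W.verts i) := by
      by_cases h1 : W.len = 1
      · exfalso
        have hv := W.valid ⟨0, W.len_pos⟩
        have e1 : (⟨0, W.len_pos⟩ : Fin W.len).castSucc = 0 := rfl
        have e2 : (⟨0, W.len_pos⟩ : Fin W.len).succ = Fin.last W.len := by
          ext; simp [h1]
        rw [e1, e2] at hv
        change G.ends _ = s(W.start, W.finish) at hv
        rw [hWs, hWf] at hv
        apply hloop (W.edges ⟨0, W.len_pos⟩)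
        rw [hv]; simp
      · have hl := W.len_pos
        refine lt_of_lt_of_le (hdpos _ (hWi ⟨1, by omega⟩ ?_ ?_)) (hi _)
        · intro h; simpa using congrArg Fin.val h
        · intro h; have := congrArg Fin.val h; simp at this; omega
    have his : W.verts i ≠ s := fun h => by rw [h, hds] at hpos; exact lt_irrefl _ hpos
    have hi0 : i ≠ 0 := fun h => his (by rw [h]; exact hWs)
    have hil : i ≠ Fin.last _ := fun h => his (by rw [h]; exact hWf)
    have hi0' : 0 < i.val := Nat.pos_of_ne_zero fun h => hi0 (Fin.ext h)
    have hil' : i.val < W.len := by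
      have := i.isLt
      have : i.val ≠ W.len := fun h => hil (Fin.ext h)
      omega
    have key : ∀ (j : Fin W.len) (w : V), G.ends (W.edges j) = s(w, W.verts i) →
        d w ≤ d (W.verts i) → W.edges j = pe (W.verts i) := by
      intro j w hj hw
      obtain ⟨z, hz, hz1, hzj⟩ := hno j
      have h1 := hpe z hz hz1
      rw [hzj, hj, Sym2.eq_iff] at h1
      rcases h1 with ⟨-, h⟩ | ⟨h1, h2⟩
      · rw [h, hzj]
      · exfalso
        have := hparlt z hz hz1
        rw [← h2, ← h1] at this
        linarith
    have ka : W.edges ⟨i.val - 1, by omega⟩ = pe (W.verts i) := by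
      refine key _ (W.verts (⟨i.val - 1, by omega⟩ : Fin W.len).castSucc) ?_ (hi _)
      rw [W.valid]
      congr 3
      ext; simp; omega
    have kb : W.edges ⟨i.val, hil'⟩ = pe (W.verts i) := by
      refine key _ (W.verts (⟨i.val, hil'⟩ : Fin W.len).succ) ?_ (hi _)
      rw [W.valid, Sym2.eq_swap]
      rfl
    exact hWu ⟨i.val - 1, by omega⟩ ⟨i.val, hil'⟩ (by simp; omega) (ka.trans kb.symm)
  obtain ⟨i0, hi0⟩ := hnt
  have hsum := hcon i0
  have hval := W.valid i0
  revert hi0 hsum hval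
  generalize W.edges i0 = e
  generalize W.verts i0.castSucc = u
  generalize W.verts i0.succ = v
  intro hnt hsum hval
  have hu1 : d u < 1 := by have := hd0 v; linarith
  have hv1 : d v < 1 := by have := hd0 u; linarith
  obtain ⟨n, a1, a2, a3, a4, a5⟩ := aux_chain s x d par hds hxs hx hpar u hu1
  obtain ⟨m, b1, b2, b3, b4, b5⟩ := aux_chain s x d par hds hxs hx hpar v hv1
  let vv : ℕ → V := fun i => if i ≤ n then par^[n - i] u else par^[i - n - 1] v
  let ee : ℕ → E := fun i => if i < n then pe (par^[n - 1 - i] u) else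
    if i = n then e else pe (par^[i - n - 1] v)
  have hinjA : ∀ i j, i < n → j < n → pe (par^[i] u) = pe (par^[j] u) → i = j := by
    intro i j hi hj h
    have h := hpeinj _ _ (a2 i hi) (a2 j hj) (a3 i hi.le) (a3 j hj.le) h
    rcases lt_trichotomy i j with h1 | h1 | h1
    · have := a4 i j h1 hj.le; rw [h] at this; exact absurd this (lt_irrefl _)
    · exact h1
    · have := a4 j i h1 hi.le; rw [h] at this; exact absurd this (lt_irrefl _)
  have hinjB : ∀ i j, i < m → j < m → pe (par^[i] v) = pe (par^[j] v) → i = j := by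
    intro i j hi hj h
    have h := hpeinj _ _ (b2 i hi) (b2 j hj) (b3 i hi.le) (b3 j hj.le) h
    rcases lt_trichotomy i j with h1 | h1 | h1
    · have := b4 i j h1 hj.le; rw [h] at this; exact absurd this (lt_irrefl _)
    · exact h1
    · have := b4 j i h1 hi.le; rw [h] at this; exact absurd this (lt_irrefl _)
  have hneA : ∀ i, i < n → pe (par^[i] u) ≠ e := fun i hi => hnt _ (a2 i hi) (a3 i hi.le)
  have hneB : ∀ i, i < m → pe (par^[i] v) ≠ e := fun i hi => hnt _ (b2 i hi) (b3 i hi.le)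
  have hvalid : ∀ i, i < n + 1 + m → G.ends (ee i) = s(vv i, vv (i + 1)) := by
    intro i hi
    rcases lt_trichotomy i n with h | h | h
    · have h1 : ee i = pe (par^[n - 1 - i] u) := if_pos h
      have h2 : vv i = par^[n - 1 - i + 1] u := by
        simp only [vv, if_pos h.le]; congr 2; omega
      have h3 : vv (i + 1) = par^[n - 1 - i] u := by
        simp only [vv, if_pos (Nat.succ_le_of_lt h)]
        rw [show n - (i + 1) = n - 1 - i by omega]
      rw [h1, h2, h3, hpe _ (a2 _ (by omega)) (a3 _ (by omega)), Function.iterate_succ_apply']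
    · subst h
      simp only [ee, vv, lt_irrefl, le_refl, if_true, if_false]
      simpa using hval
    · have h1 : ee i = pe (par^[i - n - 1] v) := by
        simp only [ee]; rw [if_neg (by omega), if_neg (by omega)]
      have h2 : vv i = par^[i - n - 1] v := if_neg (by omega)
      have h3 : vv (i + 1) = par^[i - n - 1 + 1] v := by
        simp only [vv]; rw [if_neg (by omega)]; congr 2; omega
      rw [h1, h2, h3, hpe _ (b2 _ (by omega)) (b3 _ (by omega)), Function.iterate_succ_apply',
        Sym2.eq_swap]
  have hfib : ∀ i j, i < n + 1 + m → j < n + 1 + m → ee i = ee j → (i ≤ n ↔ j ≤ n) → i = j := by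
    intro i j hi hj hij hb
    simp only [ee] at hij
    by_cases hin : i ≤ n
    · have hjn := hb.1 hin
      split_ifs at hij with h1 h2 h3 h4 h5
      · have := hinjA _ _ (by omega) (by omega) hij; omega
      · exact absurd hij (hneA _ (by omega))
      · omega
      · exact absurd hij.symm (hneA _ (by omega))
      all_goals omega
    · have hjn : ¬ j ≤ n := fun h => hin (hb.2 h)
      rw [if_neg (by omega), if_neg (by omega), if_neg (by omega), if_neg (by omega)] at hij
      have := hinjB _ _ (by omega) (by omega) hij
      omega
  have huturn : ∀ i, i + 1 < n + 1 + m → ee i ≠ ee (i + 1) := by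
    intro i hi hij
    by_cases h : (i ≤ n ↔ i + 1 ≤ n)
    · have := hfib i (i + 1) (by omega) hi hij h; omega
    · have : i = n := by omega
      subst this
      simp only [ee, lt_irrefl, if_true, if_false] at hij
      rw [if_neg (by omega), if_neg (by omega)] at hij
      exact hneB _ (by omega) hij.symm
  let W' : G.Walk :=
    { len := n + 1 + m
      len_pos := by omega
      verts := fun i => vv i.val
      edges := fun i => ee i.val
      valid := fun i => hvalid i.val i.isLt }
  have hW' : W'.IsSCycle s := by
    refine ⟨?_, ?_, ?_, ?_, ?_⟩
    · change vv 0 = s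
      simpa [vv] using a1
    · change vv (n + 1 + m) = s
      simp only [vv]
      rw [if_neg (by omega), ← b1]
      congr 2; omega
    · intro i h1 h2
      change vv i.val ≠ s
      have hi := i.isLt
      have h1' : i.val ≠ 0 := fun h => h1 (Fin.ext h)
      have h2' : i.val ≠ n + 1 + m := fun h => h2 (Fin.ext h)
      change i.val < n + 1 + m + 1 at hi
      simp only [vv]
      split_ifs
      · exact a2 _ (by omega)
      · exact b2 _ (by omega)
    · intro i j hij
      change ee i.val ≠ ee j.val
      rw [← hij]
      have hj := j.isLt
      change j.val < n + 1 + m at hj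
      exact huturn _ (by omega)
    · intro f
      have : Nat.card Bool = 2 := by simp
      rw [← this]
      refine Nat.card_le_card_of_injective
        (fun i : {i : Fin W'.len // W'.edges i = f} => decide (i.1.val ≤ n)) ?_
      rintro ⟨i, hi⟩ ⟨j, hj⟩ hij
      have hij' : i.val ≤ n ↔ j.val ≤ n := by simpa using hij
      exact Subtype.ext (Fin.ext (hfib _ _ i.isLt j.isLt (hi.trans hj.symm) hij'))
  have h1 := hcov W' hW'
  have h2 : ∑ i, x (W'.verts i) = d u + d v := by
    change ∑ i : Fin (n + 1 + m + 1), x (vv i.val) = _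
    rw [Fin.sum_univ_eq_sum_range (fun i => x (vv i)) (n + 1 + m + 1), add_assoc (n + 1) m 1,
      Finset.sum_range_add, ← a5, ← b5]
    congr 1
    · rw [← Finset.sum_range_reflect]
      refine Finset.sum_congr rfl fun i hi => ?_
      have hi := Finset.mem_range.1 hi
      simp only [vv]
      rw [if_pos (by omega)]
      congr 3; omega
    · refine Finset.sum_congr rfl fun i hi => ?_
      simp only [vv]
      rw [if_neg (by omega)]
      congr 3; omega
  linarith

/-- The half-integral rounding with threshold `θ`. -/
noncomputable def roundAt (D d : V → ℝ) (θ : ℝ) (v : V) : ℝ :=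
  (Set.Ico (D v) (d v)).indicator (fun _ => (1 / 2 : ℝ)) θ +
    (Set.Ico (1 - d v) (1 - D v)).indicator (fun _ => (1 / 2 : ℝ)) θ

theorem roundAt_nonneg (D d : V → ℝ) (θ : ℝ) (v : V) : 0 ≤ roundAt D d θ v := by
  unfold roundAt
  exact add_nonneg (Set.indicator_nonneg (fun _ _ => by norm_num) _)
    (Set.indicator_nonneg (fun _ _ => by norm_num) _)

theorem roundAt_half (D d : V → ℝ) (θ : ℝ) : HalfIntegral (roundAt D d θ) := by
  classical
  intro v
  unfold roundAt
  simp only [Set.indicator_apply]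
  split_ifs <;> norm_num

theorem roundAt_cover [Fintype V] (G : Multigraph V E) (s : V) (x D d : V → ℝ)
    (hx0 : ∀ v, 0 ≤ x v) (hxs : x s = 0)
    (hD0 : ∀ v, 0 ≤ D v) (hd : ∀ v, d v = D v + x v) (hDs : D s = 0)
    (hle : ∀ e u v, G.ends e = s(u, v) → D v ≤ d u)
    (hedge : ∀ W : G.Walk, W.IsSCycle s →
      ∃ i : Fin W.len, 1 ≤ d (W.verts i.castSucc) + d (W.verts i.succ))
    (θ : ℝ) (h0 : 0 < θ) (h1 : θ < 1 / 2) : G.IsSCycleCover s (roundAt D d θ) := by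
  classical
  have hds : d s = 0 := by rw [hd, hDs, hxs]; simp
  refine ⟨roundAt_nonneg D d θ, ?_, ?_⟩
  · unfold roundAt
    rw [hds, hDs]
    simp
  intro W hW
  obtain ⟨k, hk⟩ := hedge W hW
  have hhalf : ∀ v, D v ≤ θ → θ < d v → 1 / 2 ≤ roundAt D d θ v := by
    intro v a b
    unfold roundAt
    rw [Set.indicator_of_mem (Set.mem_Ico.2 ⟨a, b⟩)]
    have : 0 ≤ (Set.Ico (1 - d v) (1 - D v)).indicator (fun _ => (1 / 2 : ℝ)) θ :=
      Set.indicator_nonneg (fun _ _ => by norm_num) _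
    linarith
  have hone : ∀ v, D v ≤ θ → 1 - θ ≤ d v → 1 ≤ roundAt D d θ v := by
    intro v a b
    unfold roundAt
    rw [Set.indicator_of_mem (Set.mem_Ico.2 ⟨a, by linarith⟩),
      Set.indicator_of_mem (Set.mem_Ico.2 ⟨by linarith, by linarith⟩)]
    norm_num
  let P : Finset (Fin (W.len + 1)) := Finset.univ.filter fun i => θ < d (W.verts i)
  have hP : ∀ i, i ∈ P ↔ θ < d (W.verts i) := fun i => by simp [P]
  have hPne : P.Nonempty := by
    by_contra hne
    rw [Finset.not_nonempty_iff_eq_empty] at hne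
    have hn : ∀ i, d (W.verts i) ≤ θ := fun i => by
      by_contra h
      have := (hP i).2 (not_le.1 h)
      rw [hne] at this
      simp at this
    have := hn k.castSucc
    have := hn k.succ
    linarith
  set i := P.min' hPne with hidef
  set j := P.max' hPne with hjdef
  have hiP : θ < d (W.verts i) := (hP i).1 (P.min'_mem hPne)
  have hjP : θ < d (W.verts j) := (hP j).1 (P.max'_mem hPne)
  have hi0 : 0 < i.val := by
    refine Nat.pos_of_ne_zero fun h => ?_
    have : i = 0 := Fin.ext h
    rw [this] at hiP
    have hst : W.verts 0 = s := hW.1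
    rw [hst, hds] at hiP
    linarith
  have hjl : j.val < W.len := by
    have := j.isLt
    have : j.val ≠ W.len := by
      intro h
      have : j = Fin.last _ := Fin.ext h
      rw [this] at hjP
      have hst : W.verts (Fin.last _) = s := hW.2.1
      rw [hst, hds] at hjP
      linarith
    omega
  have hiD : D (W.verts i) ≤ θ := by
    have hil := i.isLt
    let p : Fin W.len := ⟨i.val - 1, by omega⟩
    have hps : p.succ = i := by ext; simp [p]; omega
    have hv := W.valid p
    rw [hps] at hv
    refine (hle _ _ _ hv).trans ?_
    by_contra h
    have h2 : i ≤ p.castSucc := P.min'_le _ ((hP _).2 (not_le.1 h))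
    have h3 : i.val ≤ p.val := h2
    simp only [p] at h3
    omega
  have hjD : D (W.verts j) ≤ θ := by
    let p : Fin W.len := ⟨j.val, hjl⟩
    have hps : p.castSucc = j := rfl
    have hv := W.valid p
    rw [hps, Sym2.eq_swap] at hv
    refine (hle _ _ _ hv).trans ?_
    by_contra h
    have h2 : p.succ ≤ j := P.le_max' _ ((hP _).2 (not_le.1 h))
    have h3 : p.val + 1 ≤ j.val := h2
    simp only [p] at h3
    omega
  by_cases hij : i = j
  · by_cases hbig : 1 - θ ≤ d (W.verts i)
    · refine (hone _ hiD hbig).trans ?_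
      exact Finset.single_le_sum (f := fun i => roundAt D d θ (W.verts i))
        (fun i _ => roundAt_nonneg D d θ _) (Finset.mem_univ i)
    · exfalso
      push Not at hbig
      have hoth : ∀ q, q ≠ i → d (W.verts q) ≤ θ := by
        intro q hq
        by_contra h
        have hqP := (hP q).2 (not_le.1 h)
        have h2 : i ≤ q := P.min'_le _ hqP
        have h3 : q ≤ i := by rw [hij]; exact P.le_max' _ hqP
        exact hq (le_antisymm h3 h2)
      by_cases hka : k.castSucc = i
      · have : k.succ ≠ i := by
          intro h
          have := congrArg Fin.val (hka.trans h.symm)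
          simp at this
        have := hoth _ this
        rw [hka] at hk
        linarith
      · have h4 := hoth _ hka
        by_cases hkb : k.succ = i
        · rw [hkb] at hk
          linarith
        · have := hoth _ hkb
          linarith
  · have h2 : ∑ q ∈ ({i, j} : Finset _), roundAt D d θ (W.verts q) ≤
        ∑ q, roundAt D d θ (W.verts q) :=
      Finset.sum_le_sum_of_subset_of_nonneg (Finset.subset_univ _)
        (fun q _ _ => roundAt_nonneg D d θ _)
    rw [Finset.sum_pair hij] at h2
    have := hhalf _ hiD hiP
    have := hhalf _ hjD hjP
    linarith

theorem aux_indicator_integrable (a b : ℝ) :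
    MeasureTheory.IntegrableOn ((Set.Ico a b).indicator (fun _ => (1 / 2 : ℝ)))
      (Set.Ioo 0 (1 / 2)) := by
  refine MeasureTheory.Integrable.indicator ?_ measurableSet_Ico
  exact MeasureTheory.integrable_const _

theorem aux_indicator_integral (a b : ℝ) :
    ∫ t in Set.Ioo (0 : ℝ) (1 / 2), (Set.Ico a b).indicator (fun _ => (1 / 2 : ℝ)) t =
      (max 0 (min b (1 / 2) - max a 0)) * (1 / 2) := by
  rw [MeasureTheory.setIntegral_congr_set (MeasureTheory.Ioo_ae_eq_Ico),
    MeasureTheory.setIntegral_indicator measurableSet_Ico, Set.Ico_inter_Ico,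
    MeasureTheory.setIntegral_const, smul_eq_mul]
  congr 1
  rw [MeasureTheory.measureReal_def, Real.volume_Ico, ENNReal.toReal_ofReal', max_comm, max_comm a,
    min_comm b]

theorem aux_round [Fintype V] (x D d : V → ℝ) (hx0 : ∀ v, 0 ≤ x v)
    (hD0 : ∀ v, 0 ≤ D v) (hd : ∀ v, d v = D v + x v) :
    ∃ θ ∈ Set.Ioo (0 : ℝ) (1 / 2), ∑ v, roundAt D d θ v ≤ ∑ v, x v := by
  have hint : ∀ v, MeasureTheory.IntegrableOn (fun θ => roundAt D d θ v) (Set.Ioo 0 (1 / 2)) :=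
    fun v => (aux_indicator_integrable _ _).add (aux_indicator_integrable _ _)
  have hI : MeasureTheory.IntegrableOn (fun θ => ∑ v, roundAt D d θ v) (Set.Ioo 0 (1 / 2)) :=
    MeasureTheory.integrable_finsetSum _ fun v _ => hint v
  obtain ⟨θ, hθ, h⟩ := MeasureTheory.exists_le_setAverage (μ := MeasureTheory.volume)
    (by simp [Real.volume_Ioo]) (by simp [Real.volume_Ioo]) hI
  refine ⟨θ, hθ, h.trans ?_⟩
  rw [MeasureTheory.setAverage_eq, MeasureTheory.integral_finsetSum _ fun v _ => hint v]
  have hvol : MeasureTheory.volume.real (Set.Ioo (0 : ℝ) (1 / 2)) = 1 / 2 := by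
    rw [MeasureTheory.measureReal_def, Real.volume_Ioo, ENNReal.toReal_ofReal (by norm_num)]
    norm_num
  rw [hvol, smul_eq_mul, Finset.mul_sum]
  refine Finset.sum_le_sum fun v _ => ?_
  have : ∫ θ in Set.Ioo (0 : ℝ) (1 / 2), roundAt D d θ v = _ :=
    MeasureTheory.integral_add (aux_indicator_integrable (D v) (d v))
      (aux_indicator_integrable (1 - d v) (1 - D v))
  rw [this, aux_indicator_integral, aux_indicator_integral]
  have h1 := hD0 v
  have h2 := hd v
  have h3 := hx0 v
  have m1 : max 0 (min (d v) (1 / 2) - max (D v) 0) ≤ min (d v) (1 / 2) - min (D v) (1 / 2) := by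
    refine max_le (sub_nonneg.2 (min_le_min_right _ (by linarith))) (sub_le_sub_left ?_ _)
    exact (min_le_left _ _).trans (le_max_left _ _)
  have m2 : max 0 (min (1 - D v) (1 / 2) - max (1 - d v) 0) ≤
      max (d v) (1 / 2) - max (D v) (1 / 2) := by
    refine max_le (sub_nonneg.2 (max_le_max_right _ (by linarith))) ?_
    have p1 : max (D v) (1 / 2) ≤ 1 - min (1 - D v) (1 / 2) := by
      have q1 := min_le_left (1 - D v) (1 / 2)
      have q2 := min_le_right (1 - D v) (1 / 2)
      exact max_le (by linarith) (by linarith)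
    have p2 : 1 - d v ≤ max (1 - d v) 0 := le_max_left _ _
    have p3 : d v ≤ max (d v) (1 / 2) := le_max_left _ _
    linarith
  have m3 := min_add_max (d v) (1 / 2)
  have m4 := min_add_max (D v) (1 / 2)
  have m5 : ((1 / 2 : ℝ))⁻¹ = 2 := by norm_num
  rw [m5]
  linarith

/-- Rounding a cover which is positive outside `s`. -/
theorem aux_main_pos [Fintype V] (G : Multigraph V E) (hloop : G.LoopFree) (s : V) (x : V → ℝ)
    (hx : ∀ v, v ≠ s → 0 < x v) (hc : G.IsSCycleCover s x) :
    ∃ y, G.IsSCycleCover s y ∧ HalfIntegral y ∧ ∑ v, y v ≤ ∑ v, x v := by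
  obtain ⟨D, d, hD0, hd, hDs, hle, hatt⟩ := aux_dist G s x hc.1 hc.2.1
  obtain ⟨θ, hθ, hsum⟩ := aux_round x D d hc.1 hD0 hd
  exact ⟨roundAt D d θ, roundAt_cover G s x D d hc.1 hc.2.1 hD0 hd hDs hle
    (fun W hW => aux_edge G hloop s x D d hx hc hD0 hd hDs hatt W hW) θ hθ.1 hθ.2,
    roundAt_half D d θ, hsum⟩

theorem aux_cover_one [Fintype V] [DecidableEq V] (G : Multigraph V E) (hloop : G.LoopFree)
    (s : V) : G.IsSCycleCover s (fun v => if v = s then 0 else 1) := by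
  have hnn : ∀ v, (0 : ℝ) ≤ if v = s then 0 else 1 := fun v => by split_ifs <;> norm_num
  refine ⟨hnn, by simp, ?_⟩
  intro W hW
  have hl := W.len_pos
  have h1 : W.len ≠ 1 := by
    intro h1
    have hv := W.valid ⟨0, W.len_pos⟩
    have e1 : (⟨0, W.len_pos⟩ : Fin W.len).castSucc = 0 := rfl
    have e2 : (⟨0, W.len_pos⟩ : Fin W.len).succ = Fin.last W.len := by
      ext; simp [h1]
    rw [e1, e2] at hv
    change G.ends _ = s(W.start, W.finish) at hv
    rw [hW.1, hW.2.1] at hv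
    apply hloop (W.edges ⟨0, W.len_pos⟩)
    rw [hv]; simp
  let i : Fin (W.len + 1) := ⟨1, by omega⟩
  have hi : W.verts i ≠ s := by
    refine hW.2.2.1 i ?_ ?_
    · intro h; simpa [i] using congrArg Fin.val h
    · intro h; have := congrArg Fin.val h; simp [i] at this; omega
  have := Finset.single_le_sum (f := fun i => if W.verts i = s then (0 : ℝ) else 1)
    (fun i _ => hnn _) (Finset.mem_univ i)
  simpa [hi] using this

end Aux

end Multigraph

/-- there exists a half-integral minimum `s`-cycle cover. -/
theorem stmt3_exists_halfIntegral_minSCycleCover {V E : Type} [Fintype V] [Fintype E]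
    (G : Multigraph V E) (hloop : G.LoopFree) (s : V) :
    ∃ x : V → ℝ, G.IsSCycleCover s x ∧ Multigraph.HalfIntegral x ∧
      ∀ x' : V → ℝ, G.IsSCycleCover s x' → ∑ v, x v ≤ ∑ v, x' v := by
  classical
  let A : Set (V → ℝ) := {x | G.IsSCycleCover s x ∧ Multigraph.HalfIntegral x}
  have hfin : A.Finite := by
    refine (Set.Finite.pi' (t := fun _ : V => ({0, 1/2, 1} : Set ℝ))
      (fun _ => Set.toFinite _)).subset ?_
    intro x hx v
    simpa using hx.2 v
  have hne : A.Nonempty := by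
    obtain ⟨y, h1, h2, -⟩ := Multigraph.aux_main_pos G hloop s _
      (fun v hv => by simp [hv]) (Multigraph.aux_cover_one G hloop s)
    exact ⟨y, h1, h2⟩
  obtain ⟨x, hx, hmin⟩ := Set.exists_min_image A (fun x => ∑ v, x v) hfin hne
  refine ⟨x, hx.1, hx.2, fun x' hx' => ?_⟩
  refine le_of_forall_pos_le_add fun ε hε => ?_
  let δ : ℝ := ε / (Fintype.card V + 1)
  have hc : (0 : ℝ) < Fintype.card V + 1 := by positivity
  have hδ : 0 < δ := div_pos hε hc
  let z : V → ℝ := fun v => x' v + if v = s then 0 else δ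
  have hxz : ∀ v, x' v ≤ z v := fun v => by
    simp only [z]; split_ifs <;> linarith
  have hz : G.IsSCycleCover s z := by
    refine ⟨fun v => (hx'.1 v).trans (hxz v), by simp [z, hx'.2.1], fun W hW => ?_⟩
    exact (hx'.2.2 W hW).trans (Finset.sum_le_sum fun i _ => hxz _)
  obtain ⟨y, h1, h2, h3⟩ := Multigraph.aux_main_pos G hloop s z
    (fun v hv => by
      simp only [z, if_neg hv]
      have := hx'.1 v
      linarith) hz
  have h4 : ∑ v, z v ≤ ∑ v, (x' v + δ) := by
    refine Finset.sum_le_sum fun v _ => ?_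
    simp only [z]; split_ifs <;> linarith
  have h5 : (Fintype.card V : ℝ) * δ ≤ ε := by
    have : (Fintype.card V + 1 : ℝ) * δ = ε := mul_div_cancel₀ _ hc.ne'
    linarith
  have h7 : ∑ v, (x' v + δ) = ∑ v, x' v + Fintype.card V * δ := by
    rw [Finset.sum_add_distrib, Finset.sum_const, Finset.card_univ, nsmul_eq_mul]
  have h6 := hmin y ⟨h1, h2⟩
  linarith
end

section
/- Let G=(V,E) be a multigraph without self-loops and let s ∈ V. If there exists a minimum feedback vertex set of G that does not contain s, then for every half-integral minimum s-cycle cover x of G there exists a minimum feedback vertex set S of G such that x⁻¹(1) ⊆ S and s ∉ S (persistency). -/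
namespace Multigraph

variable {V E : Type}

/-- `P` is a simple path `p 0, …, p n` from `s` to `u` inside `Y`, of length `n`. -/
def PathN (G : Multigraph V E) (Y : Set V) (s u : V) (n : ℕ) (p : ℕ → V) (q : ℕ → E) : Prop :=
  p 0 = s ∧ p n = u ∧ (∀ i, i ≤ n → p i ∈ Y) ∧
  (∀ i j, i ≤ n → j ≤ n → p i = p j → i = j) ∧
  (∀ i, i < n → G.ends (q i) = s(p i, p (i+1)))

def PL (G : Multigraph V E) (Y : Set V) (s u : V) (n : ℕ) : Prop :=
  ∃ p q, G.PathN Y s u n p q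

def PT (G : Multigraph V E) (Y : Set V) (s u : V) : Prop := ∃ n, G.PL Y s u n

theorem PathN.initial {G : Multigraph V E} {Y : Set V} {s u : V} {n : ℕ} {p : ℕ → V} {q : ℕ → E}
    (h : G.PathN Y s u n p q) {i : ℕ} (hi : i ≤ n) : G.PathN Y s (p i) i p q := by
  obtain ⟨h0, h1, h2, h3, h4⟩ := h
  exact ⟨h0, rfl, fun j hj => h2 j (by omega), fun a b ha hb => h3 a b (by omega) (by omega),
    fun j hj => h4 j (by omega)⟩

theorem PathN.mono {G : Multigraph V E} {Y Z : Set V} {s u : V} {n : ℕ} {p : ℕ → V} {q : ℕ → E}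
    (h : G.PathN Y s u n p q) (hYZ : ∀ i, i ≤ n → p i ∈ Z) : G.PathN Z s u n p q := by
  obtain ⟨h0, h1, h2, h3, h4⟩ := h
  exact ⟨h0, h1, hYZ, h3, h4⟩

theorem PathN.edge_inj {G : Multigraph V E} {Y : Set V} {s u : V} {n : ℕ} {p : ℕ → V} {q : ℕ → E}
    (h : G.PathN Y s u n p q) {i j : ℕ} (hi : i < n) (hj : j < n) (hq : q i = q j) : i = j := by
  obtain ⟨h0, h1, h2, h3, h4⟩ := h
  have e := h4 i hi
  rw [hq, h4 j hj, Sym2.eq_iff] at e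
  rcases e with ⟨a, b⟩ | ⟨a, b⟩
  · exact (h3 _ _ (by omega) (by omega) a).symm
  · have := h3 _ _ (by omega) (by omega) a
    have := h3 _ _ (by omega) (by omega) b
    omega

theorem PT.refl {G : Multigraph V E} {Y : Set V} {s : V} (hs : s ∈ Y) (e : E) : G.PT Y s s :=
  ⟨0, fun _ => s, fun _ => e, rfl, rfl, fun _ _ => hs, fun i j _ _ _ => by omega,
    fun i hi => by omega⟩

theorem PathN.snoc {G : Multigraph V E} {Y : Set V} {s u w : V} {n : ℕ} {p : ℕ → V} {q : ℕ → E}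
    (h : G.PathN Y s u n p q) {Z : Set V} (hYZ : Y ⊆ Z) (hw : w ∈ Z)
    (hnew : ∀ i, i ≤ n → p i ≠ w) {e : E} (he : G.ends e = s(u, w)) :
    G.PathN Z s w (n+1) (fun i => if i ≤ n then p i else w) (fun i => if i < n then q i else e) := by
  obtain ⟨h0, h1, h2, h3, h4⟩ := h
  refine ⟨by simp [h0], by simp, ?_, ?_, ?_⟩
  · intro i hi
    by_cases hin : i ≤ n
    · simpa [hin] using hYZ (h2 i hin)
    · simpa [hin] using hw
  · intro i j hi hj hij
    by_cases hin : i ≤ n <;> by_cases hjn : j ≤ n <;> simp only [hin, hjn, if_true, if_false] at hij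
    · exact h3 i j hin hjn hij
    · exact absurd hij (hnew i hin)
    · exact absurd hij.symm (hnew j hjn)
    · omega
  · intro i hi
    by_cases hin : i < n
    · have a : i ≤ n := by omega
      have b : i + 1 ≤ n := by omega
      simpa [hin, a, b] using h4 i hin
    · have a : i = n := by omega
      subst a
      simp [h1, he]

theorem PT.step {G : Multigraph V E} {Y : Set V} {s u w : V} (h : G.PT Y s u) (hw : w ∈ Y)
    {e : E} (he : G.ends e = s(u, w)) : G.PT Y s w := by
  obtain ⟨n, p, q, hp⟩ := h
  by_cases hnew : ∀ i, i ≤ n → p i ≠ w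
  · exact ⟨_, _, _, hp.snoc subset_rfl hw hnew he⟩
  · push Not at hnew
    obtain ⟨i, hi, rfl⟩ := hnew
    exact ⟨i, p, q, hp.initial hi⟩

theorem PT.trans {G : Multigraph V E} {Y : Set V} {s u w : V} (h : G.PT Y s u)
    (h' : G.PT Y u w) : G.PT Y s w := by
  obtain ⟨n, p, q, h0, h1, h2, h3, h4⟩ := h'
  have : ∀ i, i ≤ n → G.PT Y s (p i) := by
    intro i
    induction i with
    | zero => intro _; rw [h0]; exact h
    | succ i ih => intro hi; exact (ih (by omega)).step (h2 _ hi) (h4 i (by omega))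
  rw [← h1]; exact this n le_rfl

theorem PT.symm {G : Multigraph V E} {Y : Set V} {s u : V} (h : G.PT Y s u) : G.PT Y u s := by
  obtain ⟨n, p, q, h0, h1, h2, h3, h4⟩ := h
  refine ⟨n, fun i => p (n - i), fun i => q (n - 1 - i), by simpa using h1, by simpa using h0,
    fun i _ => h2 _ (by omega), ?_, ?_⟩
  · intro i j hi hj hij
    have := h3 _ _ (by omega) (by omega) hij
    omega
  · intro i hi
    have := h4 (n - 1 - i) (by omega)
    have e1 : n - 1 - i + 1 = n - i := by omega
    have e2 : n - (i + 1) = n - 1 - i := by omega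
    rw [e1] at this
    simp only [e2]
    rw [this, Sym2.eq_swap]

theorem PT.mem {G : Multigraph V E} {Y : Set V} {s u : V} (h : G.PT Y s u) : u ∈ Y := by
  obtain ⟨n, p, q, h0, h1, h2, h3, h4⟩ := h
  exact h1 ▸ h2 n le_rfl

theorem PT.mono {G : Multigraph V E} {Y Z : Set V} {s u : V} (h : G.PT Y s u) (hYZ : Y ⊆ Z) :
    G.PT Z s u := by
  obtain ⟨n, p, q, hp⟩ := h
  exact ⟨n, p, q, hp.mono fun i hi => hYZ (hp.2.2.1 i hi)⟩

theorem PT.restrict {G : Multigraph V E} {Y : Set V} {s u : V} (h : G.PT Y s u) :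
    G.PT {w | G.PT Y s w} s u := by
  obtain ⟨n, p, q, hp⟩ := h
  exact ⟨n, p, q, hp.mono fun i hi => ⟨i, p, q, hp.initial hi⟩⟩

def Two (G : Multigraph V E) (Y : Set V) (v : V) : Prop :=
  ∃ e e' u u', e ≠ e' ∧ u ∈ Y ∧ u' ∈ Y ∧ G.ends e = s(u, v) ∧ G.ends e' = s(u', v)

def One (G : Multigraph V E) (Y : Set V) (v : V) : Prop :=
  ∃ e u, u ∈ Y ∧ G.ends e = s(u, v)

/-- Two simple paths from `s` to `v` with different last edges form an `s`-cycle. -/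
theorem two_paths {G : Multigraph V E} {Z : Set V} {s v : V} {m m' : ℕ}
    {p p' : ℕ → V} {q q' : ℕ → E} (h : G.PathN Z s v (m+1) p q) (h' : G.PathN Z s v (m'+1) p' q')
    (hne : q m ≠ q' m') {x : V → ℝ} (hx : G.IsSCycleCover s x)
    (hz : ∀ i, i ≤ m → x (p i) = 0) (hz' : ∀ i, i ≤ m' → x (p' i) = 0) : 1 ≤ x v := by
  classical
  have hi := @PathN.edge_inj _ _ _ _ _ _ _ _ _ h
  have hi' := @PathN.edge_inj _ _ _ _ _ _ _ _ _ h'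
  obtain ⟨h0, h1, h2, h3, h4⟩ := h
  obtain ⟨h0', h1', h2', h3', h4'⟩ := h'
  let W : G.Walk :=
    { len := m + m' + 2
      len_pos := by omega
      verts := fun i => if i.val ≤ m + 1 then p i.val else p' (m + m' + 2 - i.val)
      edges := fun i => if i.val ≤ m then q i.val else q' (m + m' + 1 - i.val)
      valid := by
        rintro ⟨i, hi⟩
        simp only [Fin.castSucc_mk, Fin.succ_mk]
        by_cases a : i ≤ m
        · have b : i ≤ m + 1 := by omega
          have c : i + 1 ≤ m + 1 := by omega
          simp only [a, b, c, if_true]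
          exact h4 i (by omega)
        · have c : ¬ (i + 1 ≤ m + 1) := by omega
          have key := h4' (m + m' + 1 - i) (by omega)
          have e1 : m + m' + 1 - i + 1 = m + m' + 2 - i := by omega
          have e2 : m + m' + 2 - (i + 1) = m + m' + 1 - i := by omega
          rw [e1] at key
          simp only [a, c, if_false, e2]
          rw [key, Sym2.eq_swap]
          by_cases b : i ≤ m + 1
          · have : i = m + 1 := by omega
            subst this
            simp only [le_refl, if_true]
            rw [h1, ← h1']
            congr 3
            omega
          · simp only [b, if_false] }
  have hW : W.IsSCycle s := by
    refine ⟨?_, ?_, ?_, ?_, ?_⟩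
    · simp [Walk.start, W, h0]
    · have : ¬ (m + m' + 2 ≤ m + 1) := by omega
      simp [Walk.finish, W, this, h0']
    · rintro ⟨i, hi⟩ hi0 hil
      have hi0' : i ≠ 0 := fun h => hi0 (Fin.ext h)
      have hil' : i ≠ m + m' + 2 := fun h => hil (Fin.ext h)
      have hi2 : i < m + m' + 2 + 1 := hi
      intro hs
      simp only [W] at hs
      split_ifs at hs with a
      · exact hi0' (h3 _ _ a (by omega) (hs.trans h0.symm))
      · have := h3' _ _ (by omega) (by omega) (hs.trans h0'.symm)
        omega
    · rintro ⟨i, hi1⟩ ⟨j, hj1⟩ hij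
      have hi2 : i < m + m' + 2 := hi1
      have hj2 : j < m + m' + 2 := hj1
      simp only at hij
      subst hij
      intro hs
      simp only [W] at hs
      split_ifs at hs with a b b
      · have := hi (by omega) (by omega) hs
        omega
      · have : i = m := by omega
        subst this
        apply hne
        rw [hs]
        congr 1
        omega
      · omega
      · have := hi' (by omega) (by omega) hs
        omega
    · intro e
      have : Function.Injective (fun i : {i : Fin W.len // W.edges i = e} => decide (i.1.val ≤ m)) := by
        rintro ⟨⟨i, hi1⟩, hie⟩ ⟨⟨j, hj1⟩, hje⟩ hij
        have hi2 : i < m + m' + 2 := hi1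
        have hj2 : j < m + m' + 2 := hj1
        have hs := hie.trans hje.symm
        simp only [decide_eq_decide] at hij
        simp only [W] at hs
        simp only [Subtype.mk.injEq, Fin.mk.injEq]
        split_ifs at hs with a b b
        · exact hi (by omega) (by omega) hs
        · tauto
        · tauto
        · have := hi' (by omega) (by omega) hs
          omega
      calc _ ≤ Nat.card Bool := Nat.card_le_card_of_injective _ this
        _ = 2 := by simp
  have h5 := hx.2.2 W hW
  rw [Finset.sum_eq_single (⟨m + 1, by show m + 1 < m + m' + 2 + 1; omega⟩ : Fin (W.len + 1))] at h5
  · simpa [W, h1] using h5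
  · rintro ⟨i, hi1⟩ _ hne
    have hi2 : i < m + m' + 2 + 1 := hi1
    have : i ≠ m + 1 := fun h => hne (Fin.ext h)
    simp only [W]
    split_ifs with a
    · exact hz _ (by omega)
    · exact hz' _ (by omega)
  · simp

theorem two_cover {G : Multigraph V E} {Y : Set V} {s v : V} {x : V → ℝ}
    (hx : G.IsSCycleCover s x) (hY : ∀ y ∈ Y, x y = 0) (hc : ∀ y ∈ Y, G.PT Y s y) (hv : v ∉ Y)
    (h : G.Two Y v) : 1 ≤ x v := by
  obtain ⟨e, e', u, u', hne, hu, hu', he, he'⟩ := h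
  obtain ⟨n, p, q, hp⟩ := hc u hu
  obtain ⟨n', p', q', hp'⟩ := hc u' hu'
  have a := hp.snoc (Z := insert v Y) (Set.subset_insert _ _) (Set.mem_insert _ _)
    (fun i hi h => hv (h ▸ hp.2.2.1 i hi)) he
  have a' := hp'.snoc (Z := insert v Y) (Set.subset_insert _ _) (Set.mem_insert _ _)
    (fun i hi h => hv (h ▸ hp'.2.2.1 i hi)) he'
  refine two_paths a a' (by simpa using hne) hx ?_ ?_
  · intro i hi
    simpa [hi] using hY _ (hp.2.2.1 i hi)
  · intro i hi
    simpa [hi] using hY _ (hp'.2.2.1 i hi)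

/-- A vertex outside a connected set with two edges into it lies on a cycle. -/
theorem two_cycle {G : Multigraph V E} {Y : Set V} {s v : V} 
    (hc : ∀ y ∈ Y, G.PT Y s y) (hv : v ∉ Y)
    (h : G.Two Y v) : ∃ W : G.Walk, W.IsCycle ∧ ∀ i, W.verts i ∈ insert v Y := by
  obtain ⟨e, e', u, u', hne, hu, hu', he, he'⟩ := h
  obtain ⟨n, p, q, hp⟩ := (hc u hu).symm.trans (hc u' hu')
  have hi := @PathN.edge_inj _ _ _ _ _ _ _ _ _ hp
  obtain ⟨h0, h1, h2, h3, h4⟩ := hp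
  have hpv : ∀ i, i ≤ n → p i ≠ v := fun i hi h => hv (h ▸ h2 i hi)
  have hqv : ∀ i, i < n → v ∉ G.ends (q i) := by
    intro i hi hmem
    rw [h4 i hi, Sym2.mem_iff] at hmem
    rcases hmem with h | h
    · exact hpv i (by omega) h.symm
    · exact hpv (i+1) (by omega) h.symm
  have hve : v ∈ G.ends e := by rw [he]; simp
  have hve' : v ∈ G.ends e' := by rw [he']; simp
  let W : G.Walk :=
    { len := n + 2
      len_pos := by omega
      verts := fun i => if i.val = 0 then v else if i.val ≤ n + 1 then p (i.val - 1) else v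
      edges := fun i => if i.val = 0 then e else if i.val ≤ n then q (i.val - 1) else e'
      valid := by
        rintro ⟨i, hi⟩
        simp only [Fin.castSucc_mk, Fin.succ_mk]
        rcases i with _ | i
        · simp [h0, he, Sym2.eq_swap]
        · by_cases a : i + 1 ≤ n
          · have b : i ≤ n := by omega
            simpa [a, b] using h4 i (by omega)
          · have : i = n := by omega
            subst this
            simp [h1, he'] }
  refine ⟨W, ⟨?_, ?_, ?_⟩, ?_⟩
  · simp [Walk.start, Walk.finish, W]
  · rintro ⟨i, hi1⟩ ⟨j, hj1⟩ hij
    have hi2 : i < n + 2 := hi1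
    have hj2 : j < n + 2 := hj1
    simp only [W] at hij
    apply Fin.ext
    simp only
    split_ifs at hij with a b c d f g k l
    · omega
    · exact absurd (hij ▸ hve) (hqv _ (by omega))
    · exact absurd hij hne
    · exact absurd (hij ▸ hve) (hqv _ (by omega))
    · have := hi (by omega) (by omega) hij
      omega
    · exact absurd (hij ▸ hve') (hqv _ (by omega))
    · exact absurd hij.symm hne
    · exact absurd (hij ▸ hve') (hqv _ (by omega))
    · omega
  · rintro ⟨i, hi1⟩ ⟨j, hj1⟩ hij
    have hi2 : i < n + 2 := hi1
    have hj2 : j < n + 2 := hj1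
    have hi3 : i ≤ n + 1 := by omega
    have hj3 : j ≤ n + 1 := by omega
    simp only [W, Fin.castSucc_mk, hi3, hj3, if_true] at hij
    apply Fin.ext
    simp only
    split_ifs at hij with a b c
    · omega
    · exact absurd hij.symm (hpv _ (by omega))
    · exact absurd hij (hpv _ (by omega))
    · have := h3 _ _ (by omega) (by omega) hij
      omega
  · rintro ⟨i, hi1⟩
    simp only [W]
    split_ifs with a b
    · exact Set.mem_insert _ _
    · exact Set.mem_insert_of_mem _ (h2 _ (by omega))
    · exact Set.mem_insert _ _

open Classical in
/-- The half-integral cover associated with a set `D`. -/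
noncomputable def xD (G : Multigraph V E) (D : Set V) (v : V) : ℝ :=
  if v ∈ D then 0 else if G.Two D v then 1 else if G.One D v then 1/2 else 0

theorem xD_nonneg (G : Multigraph V E) (D : Set V) (v : V) : 0 ≤ G.xD D v := by
  unfold xD; split_ifs <;> norm_num

theorem xD_half (G : Multigraph V E) (D : Set V) (v : V) (hv : v ∉ D) (h : G.One D v) :
    1/2 ≤ G.xD D v := by
  unfold xD; split_ifs <;> norm_num

theorem xD_cover {G : Multigraph V E} {D : Set V} {s : V} {x : V → ℝ}
    (hx : G.IsSCycleCover s x) (hs : s ∈ D) (hD : ∀ y ∈ D, x y = 0) :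
    G.IsSCycleCover s (G.xD D) := by
  classical
  refine ⟨G.xD_nonneg D, by simp [xD, hs], ?_⟩
  intro W hW
  have hex : ∃ i, W.verts i ∉ D := by
    by_contra hcon
    push Not at hcon
    have := hx.2.2 W hW
    rw [Finset.sum_eq_zero (fun i _ => hD _ (hcon i))] at this
    norm_num at this
  let A : Finset (Fin (W.len + 1)) := Finset.univ.filter (fun i => W.verts i ∉ D)
  have hA : A.Nonempty := by
    obtain ⟨i, hi⟩ := hex
    exact ⟨i, by simp [A, hi]⟩
  obtain ⟨i, hiA, himin⟩ := A.exists_min_image (fun i => i.val) hA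
  obtain ⟨j, hjA, hjmax⟩ := A.exists_max_image (fun i => i.val) hA
  simp only [A, Finset.mem_filter, Finset.mem_univ, true_and] at hiA hjA himin hjmax
  have hi0 : i.val ≠ 0 := by
    intro h
    have : i = 0 := Fin.ext h
    subst this
    exact hiA (by have h := hW.1; rw [Walk.start] at h; rw [h]; exact hs)
  have hjl : j.val ≠ W.len := by
    intro h
    have : j = Fin.last _ := Fin.ext h
    subst this
    exact hjA (by have h := hW.2.1; rw [Walk.finish] at h; rw [h]; exact hs)
  have hil := i.isLt
  have hjlt := j.isLt
  let a : Fin W.len := ⟨i.val - 1, by omega⟩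
  let b : Fin W.len := ⟨j.val, by omega⟩
  have ha := W.valid a
  have hb := W.valid b
  have has : a.succ = i := by apply Fin.ext; simp [a]; omega
  have hbc : b.castSucc = j := by apply Fin.ext; simp [b]
  rw [has] at ha
  rw [hbc, Sym2.eq_swap] at hb
  have haD : W.verts a.castSucc ∈ D := by
    by_contra hcon
    have := himin _ hcon
    simp [a] at this
    omega
  have hbD : W.verts b.succ ∈ D := by
    by_contra hcon
    have := hjmax _ hcon
    simp [b] at this
  by_cases hij : i = j
  · have h2 : G.Two D (W.verts i) := by
      refine ⟨W.edges a, W.edges b, _, _, hW.2.2.2.1 a b ?_, haD, hbD, ha, hij ▸ hb⟩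
      simp [a, b, ← hij]; omega
    calc 1 = G.xD D (W.verts i) := by simp [xD, hiA, h2]
      _ ≤ _ := Finset.single_le_sum (f := fun i => G.xD D (W.verts i))
        (fun k _ => G.xD_nonneg D _) (Finset.mem_univ i)
  · have h1 := G.xD_half D _ hiA ⟨_, _, haD, ha⟩
    have h2 := G.xD_half D _ hjA ⟨_, _, hbD, hb⟩
    calc 1 ≤ G.xD D (W.verts i) + G.xD D (W.verts j) := by linarith
      _ = ∑ k ∈ {i, j}, G.xD D (W.verts k) := by rw [Finset.sum_pair hij]
      _ ≤ _ := Finset.sum_le_sum_of_subset_of_nonneg (Finset.subset_univ _)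
        (fun k _ _ => G.xD_nonneg D _)

/-- Every vertex of a cycle has two distinct edges to other vertices of the cycle. -/
theorem cycle_two {G : Multigraph V E} (hloop : G.LoopFree) {W : G.Walk} (hW : W.IsCycle)
    (i : Fin (W.len + 1)) : G.Two {u | (∃ j, W.verts j = u) ∧ u ≠ W.verts i} (W.verts i) := by
  have hne : ∀ (e : E) (u w : V), G.ends e = s(u, w) → u ≠ w := by
    intro e u w he h
    apply hloop e
    rw [he, h]
    simp
  have hlen : 2 ≤ W.len := by
    by_contra hcon
    have h1 : W.len = 1 := by have := W.len_pos; omega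
    have := hne _ _ _ (W.valid ⟨0, W.len_pos⟩)
    apply this
    have h2 := hW.1
    simp only [Walk.start, Walk.finish] at h2
    have e1 : (Fin.succ ⟨0, W.len_pos⟩ : Fin (W.len + 1)) = Fin.last W.len := by
      apply Fin.ext; simp [h1]
    rw [e1, ← h2]
    rfl
  have key : ∀ k : Fin W.len,
      G.Two {u | (∃ j, W.verts j = u) ∧ u ≠ W.verts k.castSucc} (W.verts k.castSucc) := by
    intro k
    have hk := W.valid k
    rw [Sym2.eq_swap] at hk
    by_cases hk0 : k.val = 0
    · let l : Fin W.len := ⟨W.len - 1, by omega⟩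
      have hl := W.valid l
      have : W.verts l.succ = W.verts k.castSucc := by
        have h2 := hW.1
        simp only [Walk.start, Walk.finish] at h2
        have e1 : l.succ = Fin.last _ := by apply Fin.ext; simp [l]; omega
        have e2 : k.castSucc = 0 := by apply Fin.ext; simp [hk0]
        rw [e1, e2, h2]
      rw [this] at hl
      refine ⟨_, _, _, _, ?_, ⟨⟨_, rfl⟩, hne _ _ _ hk⟩, ⟨⟨_, rfl⟩, hne _ _ _ hl⟩, hk, hl⟩
      intro h
      have := congrArg Fin.val (hW.2.1 h)
      simp [l] at this
      omega
    · have hkl := k.isLt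
      let l : Fin W.len := ⟨k.val - 1, by omega⟩
      have hl := W.valid l
      have : l.succ = k.castSucc := by apply Fin.ext; simp [l]; omega
      rw [this] at hl
      refine ⟨_, _, _, _, ?_, ⟨⟨_, rfl⟩, hne _ _ _ hk⟩, ⟨⟨_, rfl⟩, hne _ _ _ hl⟩, hk, hl⟩
      intro h
      have := congrArg Fin.val (hW.2.1 h)
      simp [l] at this
      omega
  by_cases hi : i.val = W.len
  · have h0 := key ⟨0, W.len_pos⟩
    have e : W.verts (Fin.castSucc ⟨0, W.len_pos⟩) = W.verts i := by
      have h2 := hW.1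
      simp only [Walk.start, Walk.finish] at h2
      have e1 : i = Fin.last _ := by apply Fin.ext; simp [hi]
      rw [e1, ← h2]
      rfl
    rw [e] at h0
    exact h0
  · have := i.isLt
    exact key ⟨i.val, by omega⟩

/-- If `v` is at least as far from `s` as `u ≠ v`, then `u` can be reached avoiding `v`. -/
theorem exists_dist (G : Multigraph V E) (Y : Set V) (s : V) : ∃ d : V → ℕ,
    ∀ u v, G.PT Y s u → u ≠ v → d u ≤ d v → G.PT (Y \ {v}) s u := by
  classical
  refine ⟨fun u => if h : G.PT Y s u then Nat.find h else 0, ?_⟩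
  intro u v hu huv hd
  simp only [hu, dif_pos] at hd
  obtain ⟨p, q, hp⟩ := Nat.find_spec hu
  refine ⟨Nat.find hu, p, q, hp.mono fun i hi => ⟨hp.2.2.1 i hi, ?_⟩⟩
  intro hv
  have hv' : p i = v := hv
  have hpl : G.PL Y s v i := hv' ▸ ⟨p, q, hp.initial hi⟩
  have hpt : G.PT Y s v := ⟨i, hpl⟩
  simp only [hpt, dif_pos] at hd
  have h1 : Nat.find hpt ≤ i := Nat.find_min' hpt hpl
  have : i = Nat.find hu := by omega
  apply huv
  rw [← hv', ← hp.2.1, ← this]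

end Multigraph

open Multigraph in
theorem persist_main {V E : Type} [Fintype V] (G : Multigraph V E)
    (hloop : G.LoopFree) (s : V) (T : Set V) (hT : G.IsFVS T) (hsT : s ∉ T)
    (x : V → ℝ) (hx : G.IsMinSCycleCover s x) (hhalf : Multigraph.HalfIntegral x) (e₀ : E) :
    ∃ S : Set V, G.IsFVS S ∧ S.ncard ≤ T.ncard ∧
      (∀ v : V, x v = 1 → v ∈ S) ∧ s ∉ S := by
  classical
  obtain ⟨hxc, hxm⟩ := hx
  set R : Set V := {u | G.PT {w | x w = 0} s u} with hR
  set D : Set V := {u | G.PT (R \ T) s u} with hDdef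
  have hsR : s ∈ R := PT.refl (by exact hxc.2.1) e₀
  have hR0 : ∀ v ∈ R, x v = 0 := by
    intro v hv
    have h : v ∈ {w | x w = 0} := PT.mem hv
    exact h
  have hsD : s ∈ D := PT.refl ⟨hsR, hsT⟩ e₀
  have hDR : D ⊆ R := fun v hv => (PT.mem hv).1
  have hDT : ∀ v ∈ D, v ∉ T := fun v hv => (PT.mem hv).2
  have hD0 : ∀ v ∈ D, x v = 0 := fun v hv => hR0 v (hDR hv)
  have hRc : ∀ y ∈ R, G.PT R s y := fun y hy => PT.restrict hy
  have hDc : ∀ y ∈ D, G.PT D s y := fun y hy => PT.restrict hy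
  have twoR : ∀ v, v ∉ R → G.Two R v → x v = 1 := by
    intro v hv h
    have := two_cover hxc hR0 hRc hv h
    rcases hhalf v with h | h | h <;> linarith
  have twoD : ∀ v, v ∉ D → G.Two D v → 1 ≤ x v :=
    fun v hv h => two_cover hxc hD0 hDc hv h
  have oneR : ∀ v, v ∉ R → G.One R v → 1/2 ≤ x v := by
    rintro v hv ⟨e, u, hu, he⟩
    rcases hhalf v with h | h | h
    · exact absurd (PT.step hu h he) hv
    · linarith
    · linarith
  have oneD : ∀ v, v ∉ D → v ∈ R → G.One D v → v ∈ T := by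
    rintro v hv hvR ⟨e, u, hu, he⟩
    by_contra hvT
    exact hv (PT.step hu ⟨hvR, hvT⟩ he)
  have oneDR : ∀ v, G.One D v → G.One R v := fun v ⟨e, u, hu, he⟩ => ⟨e, u, hDR hu, he⟩
  have oneDR' : ∀ v, G.One (R \ D) v → G.One R v := fun v ⟨e, u, hu, he⟩ => ⟨e, u, hu.1, he⟩
  have twoT : ∀ v, v ∉ D → G.Two D v → v ∈ T := by
    intro v hv h
    by_contra hvT
    obtain ⟨W, hW, hWv⟩ := two_cycle hDc hv h
    obtain ⟨i, hi⟩ := hT W hW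
    rcases hWv i with h | h
    · exact hvT (h ▸ hi)
    · exact hDT _ h hi
  set S : Set V := (T \ R) ∪ {v | x v = 1} ∪ {v | v ∉ R ∧ G.One (R \ D) v} with hS
  have hSR : ∀ v ∈ S, v ∉ R := by
    rintro v ((h | h) | h) hv
    · exact h.2 hv
    · have h1 : x v = 1 := h
      have := hR0 v hv
      linarith
    · exact h.1 hv
  refine ⟨S, ?_, ?_, fun v hv => Or.inl (Or.inr hv), fun h => hSR s h hsR⟩
  · -- feedback vertex set
    intro W hW
    by_contra hcon
    push Not at hcon
    obtain ⟨i, hi⟩ := hT W hW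
    have hiR : W.verts i ∈ R := by
      by_contra h
      exact hcon i (Or.inl (Or.inl ⟨hi, h⟩))
    have hiD : W.verts i ∉ D := fun h => hDT _ h hi
    obtain ⟨d, hd⟩ := G.exists_dist R s
    let A : Finset (Fin (W.len + 1)) := Finset.univ.filter (fun i => W.verts i ∈ R \ D)
    obtain ⟨k, hkA, hkmax⟩ := A.exists_max_image (fun i => d (W.verts i))
      ⟨i, by simp [A, hiR, hiD]⟩
    simp only [A, Finset.mem_filter, Finset.mem_univ, true_and] at hkA hkmax
    set v := W.verts k with hv
    have hnb : ∀ (e : E) (u : V), u ∈ {u | (∃ j, W.verts j = u) ∧ u ≠ v} → G.ends e = s(u, v) →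
        G.PT (R \ {v}) s u := by
      rintro e u ⟨⟨j, rfl⟩, hne⟩ he
      have hjR : W.verts j ∈ R := by
        by_contra h
        exact hcon j (Or.inr ⟨h, e, v, hkA, by rw [he, Sym2.eq_swap]⟩)
      by_cases hjD : W.verts j ∈ D
      · exact (hDc _ hjD).mono fun w hw => ⟨hDR hw, fun h => hkA.2 (h ▸ hw)⟩
      · exact hd _ _ (hRc _ hjR) hne (hkmax j ⟨hjR, hjD⟩)
    obtain ⟨e, e', u, u', hne, hu, hu', he, he'⟩ := cycle_two hloop hW k
    have h1 := two_cover (Y := {w | G.PT (R \ {v}) s w}) (v := v) hxc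
      (fun y hy => hR0 y (PT.mem hy).1) (fun y hy => PT.restrict hy)
      (fun h => (PT.mem h).2 rfl)
      ⟨e, e', u, u', hne, hnb e u hu he, hnb e' u' hu' he', he, he'⟩
    have := hR0 v hkA.1
    linarith
  · -- counting
    have hcov := xD_cover hxc hsD hD0
    have hle := hxm _ hcov
    have hpt : ∀ v, (if v ∈ S then (1:ℝ) else 0) - (if v ∈ T then 1 else 0)
        ≤ 2 * x v - 2 * G.xD D v := by
      intro v
      by_cases hvR : v ∈ R
      · have hvS : v ∉ S := fun h => hSR v h hvR
        have h0 := hR0 v hvR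
        simp only [hvS, if_false, h0]
        by_cases hvD : v ∈ D
        · simp only [xD, hvD, if_true]
          split_ifs <;> norm_num
        · have h2 : ¬ G.Two D v := fun h => by
            have := twoD v hvD h
            linarith
          by_cases h1 : G.One D v
          · simp [xD, hvD, h2, h1, oneD v hvD hvR h1]
          · simp only [xD, hvD, h2, h1, if_false]
            split_ifs <;> norm_num
      · have hvD : v ∉ D := fun h => hvR (hDR h)
        have hge : G.xD D v ≤ x v := by
          simp only [xD, hvD, if_false]
          split_ifs with h2 h1
          · exact twoD v hvD h2
          · exact oneR v hvR (oneDR v h1)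
          · exact hxc.1 v
        by_cases hvT : v ∈ T
        · simp only [hvT, if_true]
          split_ifs <;> linarith
        · by_cases hvS : v ∈ S
          · simp only [hvS, hvT, if_true, if_false]
            have h2 : ¬ G.Two D v := fun h => hvT (twoT v hvD h)
            by_cases hx1 : x v = 1
            · simp only [xD, hvD, h2, if_false, hx1]
              split_ifs <;> norm_num
            · have hH : G.One (R \ D) v := by
                rcases hvS with (h | h) | h
                · exact absurd h.1 hvT
                · exact absurd h hx1
                · exact h.2
              have h1 : ¬ G.One D v := by
                rintro ⟨e, u, hu, he⟩
                obtain ⟨e', u', hu', he'⟩ := hH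
                apply hx1
                apply twoR v hvR
                refine ⟨e, e', u, u', ?_, hDR hu, hu'.1, he, he'⟩
                rintro rfl
                rw [he, Sym2.congr_left] at he'
                exact hu'.2 (he' ▸ hu)
              have := oneR v hvR (oneDR' v hH)
              simp only [xD, hvD, h2, h1, if_false]
              linarith
          · simp only [hvS, hvT, if_false]
            linarith
    have hsum := Finset.sum_le_sum (fun v (_ : v ∈ Finset.univ) => hpt v)
    rw [Finset.sum_sub_distrib, Finset.sum_sub_distrib, ← Finset.mul_sum, ← Finset.mul_sum] at hsum
    have hcard : ∀ (A : Set V) [DecidablePred (· ∈ A)], ∑ v, (if v ∈ A then (1:ℝ) else 0) = (A.ncard : ℝ) := by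
      intro A _
      rw [Set.ncard_eq_toFinset_card' A]
      simp [Finset.sum_boole]
    rw [hcard, hcard] at hsum
    have : (S.ncard : ℝ) ≤ T.ncard := by linarith
    exact_mod_cast this

/-- persistency: if some minimum feedback vertex set avoids `s`,
then for every half-integral minimum `s`-cycle cover `x` there is a minimum
feedback vertex set `S` with `x⁻¹(1) ⊆ S` and `s ∉ S`. -/
theorem stmt4_persistency {V E : Type} [Fintype V] (G : Multigraph V E)
    (hloop : G.LoopFree) (s : V)
    (hmin : ∃ T : Set V, G.IsFVS T ∧ s ∉ T ∧
      ∀ T' : Set V, G.IsFVS T' → T.ncard ≤ T'.ncard)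
    (x : V → ℝ) (hx : G.IsMinSCycleCover s x) (hhalf : Multigraph.HalfIntegral x) :
    ∃ S : Set V, G.IsFVS S ∧ (∀ T' : Set V, G.IsFVS T' → S.ncard ≤ T'.ncard) ∧
      (∀ v : V, x v = 1 → v ∈ S) ∧ s ∉ S := by
  obtain ⟨T, hT, hsT, hTmin⟩ := hmin
  rcases isEmpty_or_nonempty E with hE | ⟨⟨e₀⟩⟩
  · refine ⟨T, hT, hTmin, ?_, hsT⟩
    intro v hv
    exfalso
    have h0 := hx.2 (fun _ => 0) ⟨fun _ => le_rfl, rfl,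
      fun W _ => (hE.false (W.edges ⟨0, W.len_pos⟩)).elim⟩
    have h1 := Finset.single_le_sum (f := x) (fun k _ => hx.1.1 k) (Finset.mem_univ v)
    simp only [Finset.sum_const_zero] at h0
    linarith
  · obtain ⟨S, h1, h2, h3, h4⟩ := persist_main G hloop s T hT hsT x hx hhalf e₀
    exact ⟨S, h1, fun T' hT' => h2.trans (hTmin T' hT'), h3, h4⟩
end

section
/- Let G=(V,E) be a multigraph without self-loops, let s ∈ V, and let k ≥ 1 be an integer. If the minimum size of an s-cycle cover of G is greater than k, then every feedback vertex set of G of size at most k contains s; consequently, G has a feedback vertex set of size at most k if and only if G − s has a feedback vertex set of size at most k − 1. -/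
namespace Multigraph

/-- A closed walk without U-turns contains a cycle on a subset of its vertices. -/
theorem exists_cycle_of_no_uturn {V E : Type} {G : Multigraph V E} (W : G.Walk)
    (hc : W.start = W.finish)
    (hU : ∀ i j : Fin W.len, (i : ℕ) + 1 = (j : ℕ) → W.edges i ≠ W.edges j) :
    ∃ C : G.Walk, C.IsCycle ∧ ∀ t, ∃ t', C.verts t = W.verts t' := by
  classical
  have hex : ∃ d : ℕ, 0 < d ∧ ∃ i : ℕ, ∃ h : i + d < W.len + 1,
      W.verts ⟨i, by omega⟩ = W.verts ⟨i + d, h⟩ := by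
    refine ⟨W.len, W.len_pos, 0, by omega, ?_⟩
    have := hc
    simp only [Walk.start, Walk.finish] at this
    convert this using 2
    · ext; simp
    · exact Fin.ext (Nat.zero_add _)
  obtain ⟨hd, i, h, heq⟩ := Nat.find_spec hex
  have hmin := fun m => @Nat.find_min _ _ hex m
  generalize Nat.find hex = d at *
  have hinj : ∀ a b : ℕ, ∀ hb : b < d, ∀ hab : a < b,
      W.verts ⟨i + a, by omega⟩ ≠ W.verts ⟨i + b, by omega⟩ := by
    intro a b hb hab he
    refine hmin (b - a) (by omega) ⟨by omega, i + a, by omega, ?_⟩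
    rw [he]; congr 2; omega
  have hinj' : ∀ a b : ℕ, ∀ ha : a < d, ∀ hb : b < d,
      W.verts ⟨i + a, by omega⟩ = W.verts ⟨i + b, by omega⟩ → a = b := by
    intro a b ha hb he
    rcases lt_trichotomy a b with h1 | h1 | h1
    · exact absurd he (hinj a b hb h1)
    · exact h1
    · exact absurd he.symm (hinj b a ha h1)
  have hedge : ∀ a b : ℕ, ∀ hb : b < d, ∀ hab : a < b,
      W.edges ⟨i + a, by omega⟩ ≠ W.edges ⟨i + b, by omega⟩ := by
    intro a b hb hab he
    have h1 := W.valid ⟨i + a, by omega⟩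
    have h2 := W.valid ⟨i + b, by omega⟩
    rw [he, h2, Sym2.eq_iff] at h1
    rcases h1 with ⟨h1, _⟩ | ⟨h1, _⟩
    · exact hinj a b hb hab h1.symm
    · have := hinj' b (a + 1) hb (by omega) h1
      subst this
      exact hU ⟨i + a, by omega⟩ ⟨i + (a + 1), by omega⟩ (by simp; omega) he
  refine ⟨⟨d, hd, fun t => W.verts ⟨i + t, by omega⟩, fun t => W.edges ⟨i + t, by omega⟩,
    fun t => W.valid ⟨i + t, by omega⟩⟩, ⟨heq, ?_, ?_⟩, fun t => ⟨_, rfl⟩⟩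
  · intro a b he
    by_contra hne
    rcases lt_or_gt_of_ne (fun hh => hne (Fin.ext hh) : (a : ℕ) ≠ b) with h1 | h1
    · exact hedge a b b.isLt h1 he
    · exact hedge b a a.isLt h1 he.symm
  · intro a b he
    exact Fin.ext (hinj' a b a.isLt b.isLt he)

/-- A walk of `G - s` does not visit `s`. -/
theorem deleteVertex_verts_ne {V E : Type} {G : Multigraph V E} {s : V}
    (W : (G.deleteVertex s).Walk) (t : Fin (W.len + 1)) : W.verts t ≠ s := by
  intro ht
  by_cases h : t.val < W.len
  · apply (W.edges ⟨t, h⟩).property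
    have h1 : G.ends (W.edges ⟨t, h⟩).val = _ := W.valid ⟨t, h⟩
    rw [h1, Sym2.mem_iff]
    exact Or.inl ht.symm
  · have hp := W.len_pos
    have hl : W.len - 1 < W.len := by omega
    apply (W.edges ⟨W.len - 1, hl⟩).property
    have h1 : G.ends (W.edges ⟨W.len - 1, hl⟩).val = _ := W.valid ⟨W.len - 1, hl⟩
    rw [h1, Sym2.mem_iff]
    right
    refine ht.symm.trans ?_
    congr 1
    ext
    simp
    omega

end Multigraph

/-- if every `s`-cycle cover has size greater than `k`, then
every feedback vertex set of size at most `k` contains `s`; consequently `G`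
has a feedback vertex set of size at most `k` iff `G − s` has one of size at
most `k − 1`. -/
theorem stmt5_remove_s_of_large_cover {V E : Type} [Fintype V] (G : Multigraph V E)
    (hloop : G.LoopFree) (s : V) (k : ℕ) (hk : 1 ≤ k)
    (hbig : ∀ x : V → ℝ, G.IsSCycleCover s x → (k : ℝ) < ∑ v, x v) :
    (∀ S : Set V, G.IsFVS S → S.ncard ≤ k → s ∈ S) ∧
    ((∃ S : Set V, G.IsFVS S ∧ S.ncard ≤ k) ↔
      (∃ S : Set V, s ∉ S ∧ (G.deleteVertex s).IsFVS S ∧ S.ncard ≤ k - 1)) := by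
  classical
  have hA : ∀ S : Set V, G.IsFVS S → S.ncard ≤ k → s ∈ S := by
    intro S hS hcard
    by_contra hs
    have hcov : G.IsSCycleCover s (fun v => if v ∈ S then (1 : ℝ) else 0) := by
      refine ⟨fun v => by dsimp only; split_ifs <;> norm_num, by simp [hs], ?_⟩
      intro W hW
      obtain ⟨h1, h2, -, h4, -⟩ := hW
      obtain ⟨C, hC, hsub⟩ := Multigraph.exists_cycle_of_no_uturn W (h1.trans h2.symm) h4
      obtain ⟨t, ht⟩ := hS C hC
      obtain ⟨t', ht'⟩ := hsub t
      rw [ht'] at ht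
      have := Finset.single_le_sum (f := fun i => if W.verts i ∈ S then (1 : ℝ) else 0)
        (fun i _ => by split_ifs <;> norm_num) (Finset.mem_univ t')
      simpa [ht] using this
    have hlt := hbig _ hcov
    have hsum : (∑ v, if v ∈ S then (1 : ℝ) else 0) = (S.ncard : ℝ) := by
      rw [Finset.sum_boole, Set.ncard_eq_toFinset_card']
      congr 2
      ext; simp
    rw [hsum] at hlt
    have : k < S.ncard := by exact_mod_cast hlt
    omega
  refine ⟨hA, ?_, ?_⟩
  · rintro ⟨S, hS, hcard⟩
    have hs := hA S hS hcard
    refine ⟨S \ {s}, by simp, ?_, ?_⟩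
    · intro W hW
      obtain ⟨t, ht⟩ := hS ⟨W.len, W.len_pos, W.verts, fun j => (W.edges j).val, W.valid⟩
        ⟨hW.1, Subtype.val_injective.comp hW.2.1, hW.2.2⟩
      exact ⟨t, ht, Multigraph.deleteVertex_verts_ne W t⟩
    · rw [Set.ncard_sdiff_singleton_of_mem hs]
      omega
  · rintro ⟨S, -, hS, hcard⟩
    refine ⟨insert s S, ?_, (Set.ncard_insert_le s S).trans (by omega)⟩
    intro W hW
    by_contra! hno
    have hne : ∀ t, W.verts t ≠ s := fun t h => hno t (Or.inl h)
    obtain ⟨t, ht⟩ := hS ⟨W.len, W.len_pos, W.verts, fun j => ⟨W.edges j, by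
        rw [W.valid j, Sym2.mem_iff]
        rintro (h | h)
        · exact hne _ h.symm
        · exact hne _ h.symm⟩, W.valid⟩
      ⟨hW.1, fun a b h => hW.2.1 (congrArg Subtype.val h), hW.2.2⟩
    exact hno t (Or.inr ht)
end
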